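/- arXiv:1312.4716 — 6 statements merged into one kernel-verified Lean document; each statement's English description precedes it below -/
import Mathlib

section
/- Let k be a positive integer, n = 4k, and d = (5^{4k} - 1)/(5^k - 1) + 1. Let a ∈ F_{5^n}, a ≠ 0, and let λ_1, λ_2, λ_3, λ_4 ∈ F_{5^k} be the elementary symmetric functions of a, a^{5^k}, a^{5^{2k}}, a^{5^{3k}}. Then a^{-1}x^d is a complete permutation polynomial over F_{5^n} if and only if one of the following holds: (1) λ_1 = λ_2 = λ_3 = 0 and -λ_4 is not a fourth power in F_{5^k}; (2) λ_1 = 0, λ_2 ≠ 0, -λ_2² = λ_4 + 3λ_3²λ_2^{-1}, and 2λ_2 is not a square in F_{5^k}; (3) k = 1, λ_1 = 0, λ_2 = 2 or λ_2 = -2, and λ_4 + 3λ_3²λ_2^{-1} = 4. -/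
/-!
With `K` the subfield of `q = 5 ^ k` elements and `N : F → K` the norm, `x ^ d = x * N(x)`. Since
`N` is multiplicative and surjective, a map `x ↦ x * φ(N(x))` is injective on `F` iff
`y ↦ y * N(φ(y))` is injective on `K`. For `x * N(x)` the latter map is the Frobenius `y ^ 5`; for
`x * (N(x) + a)` it is the quintic `y * ∏ (y + a ^ q ^ i)`, whose coefficients are the `λᵢ`. So the
question is when this quintic `f` permutes `K`.

Necessary conditions come from Hermite's criterion: for `t < q - 1` the coefficients of `f ^ t` at
the positive multiples of `q - 1` sum to zero. The exponents `t` are chosen by their base-5 digits,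
because a factor `H ^ 5` only involves exponents divisible by `5`, so that each digit isolates a
single coefficient. The exponent with all digits `1` gives `λ₁ = 0`. If `λ₂ = 0`, then `λ₃ = 0`
because `f (x + 1) - f x` is affine, and `f` is additive. If `λ₂ ≠ 0`, a translation makes `f` odd,
`y ^ 5 + b * y ^ 3 + c * y`, and the criterion forces `c = -b ^ 2` for `k ≥ 2`, and `c = -1` for
`k = 1`. For `c = -b ^ 2` the difference `f x - f y` factors explicitly; over `𝔽₅` with `c = -1`
the map is `b * y ^ 3`.
-/

open Polynomial Finset Function

namespace CompletePermutation

section PowersInPrimeCharacteristic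

variable {R : Type*} [CommSemiring R]

/-- `j` is the only exponent in its residue class modulo `p` at which `g` may have a nonzero
coefficient. Such a coefficient is picked out of `g * H ^ p`, since `H ^ p` only involves exponents
divisible by `p`. -/
def IsIsolatedCoeff (p : ℕ) (g : R[X]) (j : ℕ) : Prop :=
  ∀ i, i ≡ j [MOD p] → i ≠ j → g.coeff i = 0

lemma isIsolatedCoeff_of_natDegree_lt {p j : ℕ} {g : R[X]} (hj : j < p)
    (hg : g.natDegree < p + j) : IsIsolatedCoeff p g j := by
  intro i hi hij
  have hle : j ≤ i :=
    calc j = j % p := (Nat.mod_eq_of_lt hj).symm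
      _ = i % p := hi.symm
      _ ≤ i := Nat.mod_le i p
  have hstep : j + p ≤ i := hi.symm.add_le_of_lt (lt_of_le_of_ne hle hij.symm)
  exact coeff_eq_zero_of_natDegree_lt (by omega)

variable (p : ℕ) [ExpChar R p]

lemma coeff_mul_pow_expChar {g : R[X]} {j : ℕ} (hg : IsIsolatedCoeff p g j) (H : R[X]) (m : ℕ) :
    (g * H ^ p).coeff (j + p * m) = g.coeff j * H.coeff m ^ p := by
  have hp : 0 < p := expChar_pos R p
  rw [← map_frobenius_expand p H, coeff_mul, sum_eq_single (j, p * m)]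
  · rw [coeff_map, coeff_expand_mul' hp, frobenius_def]
  · rintro ⟨i, l⟩ hil hne
    rw [HasAntidiagonal.mem_antidiagonal] at hil
    rw [coeff_map, coeff_expand hp]
    split_ifs with hl
    · obtain ⟨m', rfl⟩ := hl
      have hmod : i ≡ j [MOD p] := by
        simpa [Nat.ModEq] using congrArg (· % p) hil
      have hij : i ≠ j := by
        rintro rfl
        exact hne (Prod.ext rfl (Nat.add_left_cancel hil))
      rw [hg i hmod hij, zero_mul]
    · rw [map_zero, mul_zero]
  · exact fun h => (h (HasAntidiagonal.mem_antidiagonal.2 rfl)).elim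

lemma coeff_pow_geom_sum {g : R[X]} {j : ℕ} (hg : IsIsolatedCoeff p g j) (k : ℕ) :
    (g ^ ∑ i ∈ range k, p ^ i).coeff (j * ∑ i ∈ range k, p ^ i) =
      g.coeff j ^ ∑ i ∈ range k, p ^ i := by
  induction k with
  | zero => simp
  | succ k ih =>
    have hexp : j * (p * ∑ i ∈ range k, p ^ i + 1) = j + p * (j * ∑ i ∈ range k, p ^ i) := by ring
    rw [geom_sum_succ, hexp, pow_succ', mul_comm p, pow_mul, coeff_mul_pow_expChar p hg, ih]
    ring

end PowersInPrimeCharacteristic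

section HermiteCriterion

variable {K : Type*} [Field K] [Fintype K]

lemma sum_pow_eq_ite (i : ℕ) :
    ∑ x : K, x ^ i = if i ≠ 0 ∧ Fintype.card K - 1 ∣ i then -1 else 0 := by
  classical
  rcases eq_or_ne i 0 with rfl | hi
  · simp
  · simp only [hi, ne_eq, not_false_eq_true, true_and]
    rw [← FiniteField.sum_pow_units K i, ← sum_erase univ (f := (· ^ i)) (zero_pow hi),
      sum_subtype _ (p := (· ≠ (0 : K))) (by simp)]
    exact (Fintype.sum_equiv unitsEquivNeZero _ _ fun _ => rfl).symm

lemma sum_eval_eq_neg_sum_coeff {m : ℕ} {P : K[X]}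
    (hP : P.natDegree < (Fintype.card K - 1) * (m + 1)) :
    ∑ x : K, P.eval x = -∑ s ∈ Icc 1 m, P.coeff ((Fintype.card K - 1) * s) := by
  have hq : 0 < Fintype.card K - 1 := Nat.sub_pos_of_lt Fintype.one_lt_card
  generalize hM : Fintype.card K - 1 = M at *
  calc ∑ x : K, P.eval x
      = ∑ i ∈ range (M * (m + 1)), P.coeff i * ∑ x : K, x ^ i := by
        simp_rw [eval_eq_sum_range' hP, mul_sum]
        exact sum_comm
    _ = ∑ i ∈ range (M * (m + 1)) with i ≠ 0 ∧ M ∣ i, -P.coeff i := by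
        simp_rw [sum_pow_eq_ite, hM, mul_ite, mul_neg_one, mul_zero, sum_filter]
    _ = ∑ s ∈ Icc 1 m, -P.coeff (M * s) := by
        refine (sum_nbij (M * ·) ?_ ?_ ?_ fun _ _ => rfl).symm
        · intro s hs
          rw [mem_Icc] at hs
          simp only [mem_filter, mem_range, ne_eq, mul_eq_zero, dvd_mul_right, and_true]
          exact ⟨Nat.mul_lt_mul_of_pos_left (by omega) hq, by omega⟩
        · exact fun s _ t _ hst => Nat.eq_of_mul_eq_mul_left hq hst
        · intro i hi
          simp only [coe_filter, mem_range, Set.mem_ofPred_eq] at hi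
          obtain ⟨hlt, h0, s, rfl⟩ := hi
          have hs : s < m + 1 := Nat.lt_of_mul_lt_mul_left hlt
          have hs0 : s ≠ 0 := right_ne_zero_of_mul h0
          exact ⟨s, by simp only [coe_Icc, Set.mem_Icc]; omega, rfl⟩
    _ = -∑ s ∈ Icc 1 m, P.coeff (M * s) := sum_neg_distrib _

theorem sum_coeff_pow_eq_zero_of_bijective {f : K[X]} (hf : Bijective fun x => f.eval x)
    {t m : ℕ} (ht : t < Fintype.card K - 1)
    (hm : (f ^ t).natDegree < (Fintype.card K - 1) * (m + 1)) :
    ∑ s ∈ Icc 1 m, (f ^ t).coeff ((Fintype.card K - 1) * s) = 0 := by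
  rw [← neg_eq_zero, ← sum_eval_eq_neg_sum_coeff hm]
  simp_rw [eval_pow]
  rw [hf.sum_comp (· ^ t), FiniteField.sum_pow_lt_card_sub_one K t ht]

lemma coeff_eq_zero_of_bijective_eval {p k : ℕ} [Fact p.Prime] (hp : 2 < p)
    (hK : Fintype.card K = p ^ k) {f : K[X]} (hdeg : f.natDegree ≤ p)
    (hf : Bijective fun x => f.eval x) : f.coeff (p - 1) = 0 := by
  have : CharP K p := charP_of_card_eq_prime_pow hK
  have hq : Fintype.card K - 1 = (p - 1) * ∑ i ∈ range k, p ^ i := by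
    rw [hK, Nat.geomSum_eq (by omega), Nat.mul_div_cancel' (Nat.sub_one_dvd_pow_sub_one p k)]
  have hpos : 0 < ∑ i ∈ range k, p ^ i :=
    Nat.pos_of_mul_pos_left (hq ▸ Nat.sub_pos_of_lt Fintype.one_lt_card)
  have hdeg_pow : (f ^ ∑ i ∈ range k, p ^ i).natDegree ≤ (∑ i ∈ range k, p ^ i) * p :=
    natDegree_pow_le_of_le _ hdeg
  have hsum := sum_coeff_pow_eq_zero_of_bijective hf (t := ∑ i ∈ range k, p ^ i) (m := 1)
    (hq ▸ lt_mul_left hpos (by omega)) <| hdeg_pow.trans_lt <| by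
      calc (∑ i ∈ range k, p ^ i) * p < (∑ i ∈ range k, p ^ i) * ((p - 1) * 2) :=
            Nat.mul_lt_mul_of_pos_left (by omega) hpos
        _ = (Fintype.card K - 1) * (1 + 1) := by rw [hq]; ring
  rw [hq, Icc_self, sum_singleton, mul_one,
    coeff_pow_geom_sum p (isIsolatedCoeff_of_natDegree_lt (by omega) (by omega))] at hsum
  exact eq_zero_of_pow_eq_zero hsum

end HermiteCriterion

section Quintics

/-- The monic quintic with zero constant term and the given coefficients. It equals `X * ∏ (X + aᵢ)`
when the `lᵢ` are the elementary symmetric functions of four elements `aᵢ`. -/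
noncomputable def quintic {R : Type*} [CommSemiring R] (l₁ l₂ l₃ l₄ : R) : R[X] :=
  X ^ 5 + C l₁ * X ^ 4 + C l₂ * X ^ 3 + C l₃ * X ^ 2 + C l₄ * X
variable {K : Type*} [Field K]
lemma eval_quintic (l₁ l₂ l₃ l₄ x : K) :
    (quintic l₁ l₂ l₃ l₄).eval x = x ^ 5 + l₁ * x ^ 4 + l₂ * x ^ 3 + l₃ * x ^ 2 + l₄ * x := by
  simp [quintic]

lemma natDegree_quintic_le (l₁ l₂ l₃ l₄ : K) : (quintic l₁ l₂ l₃ l₄).natDegree ≤ 5 := by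
  unfold quintic; compute_degree

lemma injective_pow_char_add_mul_iff {p : ℕ} [Fact p.Prime] [CharP K p] {c : K} (hc : c ≠ 0) :
    Injective (fun x : K => x ^ p + c * x) ↔ ¬∃ x : K, x ^ (p - 1) = -c := by
  have hp := Fact.out (p := p.Prime)
  let f : K →+ K := (frobenius K p).toAddMonoidHom + AddMonoidHom.mulLeft c
  have hf : ∀ x, f x = x * (x ^ (p - 1) + c) := fun x => by
    simp only [f, AddMonoidHom.add_apply, RingHom.toAddMonoidHom_eq_coe, AddMonoidHom.coe_coe,
      frobenius_def, AddMonoidHom.coe_mulLeft]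
    rw [mul_add, mul_pow_sub_one hp.ne_zero, mul_comm c]
  change Injective f ↔ _
  simp_rw [injective_iff_map_eq_zero, hf, mul_eq_zero, add_eq_zero_iff_eq_neg]
  constructor
  · rintro h ⟨x, hx⟩
    rw [h x (.inr hx), zero_pow (Nat.sub_ne_zero_of_lt hp.one_lt)] at hx
    exact hc (neg_eq_zero.1 hx.symm)
  · exact fun h x hx => hx.resolve_right fun hx' => h ⟨x, hx'⟩

variable [CharP K 5]

lemma eq_zero_of_injective_quintic_zero_zero {l₃ l₄ : K}
    (hf : Injective fun x => (quintic 0 0 l₃ l₄).eval x) : l₃ = 0 := by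
  simp only [eval_quintic] at hf
  by_contra h
  -- `f (x + 1) - f x = 1 + l₃ * (2 * x + 1) + l₄` vanishes for a suitable `x`.
  have heq : -(1 + l₃ + l₄) / (2 * l₃) = -(1 + l₃ + l₄) / (2 * l₃) + 1 := hf (by grind)
  grind

lemma eval_quintic_neg_sq_sub (b x y : K) :
   (quintic 0 b 0 (-b ^ 2)).eval x - (quintic 0 b 0 (-b ^ 2)).eval y =
      (x - y) * (((x - y) ^ 2 + 2 * b) ^ 2 + 2 * b * (x + y) ^ 2) := by
  rw [eval_quintic, eval_quintic]
  grind

lemma injective_quintic_neg_sq_iff {b : K} (hb : b ≠ 0) :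
    Injective (fun x => (quintic 0 b 0 (-b ^ 2)).eval x) ↔ ¬∃ x : K, x ^ 2 = 2 * b := by
  constructor
  · rintro hf ⟨x, hx⟩
    have hx0 : x = 0 := hf (by simp only [eval_quintic]; grind)
    grind
  · intro hns x y hxy
    rw [← sub_eq_zero, eval_quintic_neg_sq_sub] at hxy
    by_contra hne
    have hsq : ((x - y) ^ 2 + 2 * b) ^ 2 = -(2 * b * (x + y) ^ 2) :=
      eq_neg_of_add_eq_zero_left <| by
        simpa [sub_ne_zero.2 hne] using hxy
    -- As `-1 = 2 ^ 2` in characteristic 5, `hsq` exhibits `2 * b` as a square.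
    rcases eq_or_ne (x + y) 0 with hw | hw
    · refine hns ⟨2 * (x - y), by grind⟩
    · refine hns ⟨2 * ((x - y) ^ 2 + 2 * b) / (x + y), ?_⟩
      rw [div_pow, div_eq_iff (pow_ne_zero 2 hw)]
      grind

lemma bijective_quintic_iff_bijective_odd {l₂ : K} (hl₂ : l₂ ≠ 0) (l₃ l₄ : K) :
    Bijective (fun x => (quintic 0 l₂ l₃ l₄).eval x) ↔
      Bijective fun x => (quintic 0 l₂ 0 (l₄ + 3 * l₃ ^ 2 * l₂⁻¹)).eval x := by
  -- The translation by `3 * l₃ * l₂⁻¹` removes the quadratic term.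
  have hcomp : (fun x => (quintic 0 l₂ 0 (l₄ + 3 * l₃ ^ 2 * l₂⁻¹)).eval x) =
      Equiv.subRight ((quintic 0 l₂ l₃ l₄).eval (3 * l₃ * l₂⁻¹)) ∘
        (fun x => (quintic 0 l₂ l₃ l₄).eval x) ∘ Equiv.addRight (3 * l₃ * l₂⁻¹) := by
    funext x
    simp only [comp_apply, Equiv.coe_addRight, Equiv.subRight_apply, eval_quintic]
    grind
  rw [hcomp, Equiv.comp_bijective, Equiv.bijective_comp]

end Quintics

section OddQuintics

variable {K : Type*} [Field K]

lemma quintic_odd_sq (b c : K) : quintic 0 b 0 c ^ 2 =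
    X ^ 10 + C (2 * b) * X ^ 8 + C (b ^ 2 + 2 * c) * X ^ 6 + C (2 * b * c) * X ^ 4 +
      C (c ^ 2) * X ^ 2 := by
  simp only [quintic, map_add, map_mul, map_pow, map_zero, map_ofNat]
  ring

lemma quintic_odd_cube (b c : K) : quintic 0 b 0 c ^ 3 =
    X ^ 15 + C (3 * b) * X ^ 13 + C (3 * b ^ 2 + 3 * c) * X ^ 11 + C (b ^ 3 + 6 * b * c) * X ^ 9 +
      C (3 * b ^ 2 * c + 3 * c ^ 2) * X ^ 7 + C (3 * b * c ^ 2) * X ^ 5 + C (c ^ 3) * X ^ 3 := by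
  simp only [quintic, map_add, map_mul, map_pow, map_zero, map_ofNat]
  ring

lemma isIsolatedCoeff_quintic_odd_sq (b c : K) : IsIsolatedCoeff 5 (quintic 0 b 0 c ^ 2) 8 := by
  intro i hi hne
  unfold Nat.ModEq at hi
  simp only [quintic_odd_sq, coeff_add, coeff_C_mul, coeff_X_pow]
  repeat rw [if_neg (by omega)]
  simp

lemma isIsolatedCoeff_quintic_odd_cube (b c : K) :
    IsIsolatedCoeff 5 (quintic 0 b 0 c ^ 3) 9 := by
  intro i hi hne
  unfold Nat.ModEq at hi
  simp only [quintic_odd_cube, coeff_add, coeff_C_mul, coeff_X_pow]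
  repeat rw [if_neg (by omega)]
  simp

lemma coeff_quintic_odd_sq_eight (b c : K) : (quintic 0 b 0 c ^ 2).coeff 8 = 2 * b := by
  simp only [quintic_odd_sq, coeff_add, coeff_C_mul, coeff_X_pow]
  norm_num

lemma coeff_quintic_odd_cube_nine (b c : K) :
    (quintic 0 b 0 c ^ 3).coeff 9 = b ^ 3 + 6 * b * c := by
  simp only [quintic_odd_cube, coeff_add, coeff_C_mul, coeff_X_pow]
  norm_num

lemma coeff_quintic_mul_pow_five [CharP K 5] (l₁ l₂ l₃ l₄ : K) {j : ℕ} (h0 : 0 < j) (hj : j < 5)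
    (H : K[X]) (m : ℕ) : (quintic l₁ l₂ l₃ l₄ * H ^ 5).coeff (j + 5 * m) =
      (quintic l₁ l₂ l₃ l₄).coeff j * H.coeff m ^ 5 := by
  have : Fact (Nat.Prime 5) := ⟨Nat.prime_five⟩
  exact coeff_mul_pow_expChar 5 (isIsolatedCoeff_of_natDegree_lt hj
    ((natDegree_quintic_le l₁ l₂ l₃ l₄).trans_lt (by omega))) H m

lemma coeff_quintic_odd_mul_cube_mul_geom_sum_pow [CharP K 5] (b c : K) (k : ℕ) :
    (quintic 0 b 0 c * (quintic 0 b 0 c ^ 3 *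
      ((quintic 0 b 0 c ^ 2) ^ ∑ i ∈ range k, 5 ^ i) ^ 5) ^ 5).coeff
        (3 + 5 * (9 + 5 * (8 * ∑ i ∈ range k, 5 ^ i))) =
      b * ((b ^ 3 + 6 * b * c) * ((2 * b) ^ ∑ i ∈ range k, 5 ^ i) ^ 5) ^ 5 := by
  have : Fact (Nat.Prime 5) := ⟨Nat.prime_five⟩
  rw [coeff_quintic_mul_pow_five 0 b 0 c (by norm_num) (by norm_num),
    coeff_mul_pow_expChar 5 (isIsolatedCoeff_quintic_odd_cube b c),
    coeff_pow_geom_sum 5 (isIsolatedCoeff_quintic_odd_sq b c),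
    coeff_quintic_odd_cube_nine, coeff_quintic_odd_sq_eight]
  simp [quintic, coeff_X_pow]

variable [Fintype K]

lemma bijective_quintic_odd_iff_of_card_eq_five (hK : Fintype.card K = 5) {b c : K} (hb : b ≠ 0) :
    Bijective (fun x => (quintic 0 b 0 c).eval x) ↔ c = -1 := by
  have : Fact (Nat.Prime 5) := ⟨Nat.prime_five⟩
  have : CharP K 5 := charP_of_card_eq_prime_pow (f := 1) (by rw [hK, pow_one])
  constructor
  · intro hf
    have hdeg : (quintic 0 b 0 c ^ 2).natDegree ≤ 2 * 5 :=
      natDegree_pow_le_of_le 2 (natDegree_quintic_le 0 b 0 c)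
    have hsum := sum_coeff_pow_eq_zero_of_bijective hf (t := 2) (m := 2)
      (by rw [hK]; norm_num) (by rw [hK]; omega)
    have hcoeff : 2 * b * c + 2 * b = 0 := by
      rw [hK, sum_Icc_succ_top (by norm_num), Icc_self, sum_singleton, quintic_odd_sq] at hsum
      simp only [coeff_add, coeff_C_mul, coeff_X_pow] at hsum
      norm_num at hsum
      exact hsum
    grind
  · rintro rfl
    have hfrob : ∀ x : K, x ^ 5 = x := fun x => by rw [← hK, FiniteField.pow_card]
    have hcube : ∀ x : K, (quintic 0 b 0 (-1)).eval x = b * x ^ 3 := fun x => by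
      rw [eval_quintic, hfrob]; ring
    refine Finite.injective_iff_bijective.1 (HasLeftInverse.injective ⟨fun x => (x / b) ^ 3, ?_⟩)
    intro x
    calc ((quintic 0 b 0 (-1)).eval x / b) ^ 3 = x ^ 5 * x ^ 4 := by
          rw [hcube, mul_div_cancel_left₀ _ hb]; ring
      _ = x ^ 5 := by rw [hfrob, ← pow_succ', hfrob]
      _ = x := hfrob x

lemma eq_neg_sq_of_bijective_quintic_odd {k : ℕ} (hK : Fintype.card K = 5 ^ (k + 2)) {b c : K}
    (hb : b ≠ 0) (hf : Bijective fun x => (quintic 0 b 0 c).eval x) : c = -b ^ 2 := by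
  have : Fact (Nat.Prime 5) := ⟨Nat.prime_five⟩
  have : CharP K 5 := charP_of_card_eq_prime_pow hK
  set f := quintic 0 b 0 c
  set E := ∑ i ∈ range k, 5 ^ i
  have hq : Fintype.card K - 1 = 24 + 100 * E := by
    have hgeom : E * 4 + 1 = 5 ^ k := geom_sum_mul_add 4 k
    rw [hK, pow_add]
    omega
  have hpow : f ^ (16 + 50 * E) = f * (f ^ 3 * ((f ^ 2) ^ E) ^ 5) ^ 5 := by ring
  have hdeg : (f ^ (16 + 50 * E)).natDegree ≤ (16 + 50 * E) * 5 :=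
    natDegree_pow_le_of_le _ (natDegree_quintic_le 0 b 0 c)
  have hsum := sum_coeff_pow_eq_zero_of_bijective hf (t := 16 + 50 * E) (m := 3)
    (by omega) (by omega)
  -- In base 5 the exponent `16 + 50 * E` reads `2 ⋯ 2 3 1`; the multiples of `card K - 1` up to
  -- its degree end in the digits `4`, `3` and `2`, and `f` has no term of degree `4` or `2`.
  have hlow : (f ^ (16 + 50 * E)).coeff (4 + 5 * (4 + 20 * E)) = 0 := by
    rw [hpow, coeff_quintic_mul_pow_five 0 b 0 c (by norm_num) (by norm_num)]
    simp [quintic, coeff_X_pow]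
  have hmid : (f ^ (16 + 50 * E)).coeff (3 + 5 * (9 + 5 * (8 * E))) =
      b * ((b ^ 3 + 6 * b * c) * ((2 * b) ^ E) ^ 5) ^ 5 := by
    rw [hpow, coeff_quintic_odd_mul_cube_mul_geom_sum_pow]
  have hhigh : (f ^ (16 + 50 * E)).coeff (2 + 5 * (14 + 60 * E)) = 0 := by
    rw [hpow, coeff_quintic_mul_pow_five 0 b 0 c (by norm_num) (by norm_num)]
    simp [quintic, coeff_X_pow]
  have hcoeff : b * ((b ^ 3 + 6 * b * c) * ((2 * b) ^ E) ^ 5) ^ 5 = 0 := by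
    rw [← hsum, hq, sum_Icc_succ_top (by norm_num), sum_Icc_succ_top (by norm_num), Icc_self,
      sum_singleton, ← hmid]
    ring_nf at hlow hhigh ⊢
    rw [hlow, hhigh]
    ring
  have h2 : (2 : K) ≠ 0 := by grind
  have hzero : b ^ 3 + 6 * b * c = 0 := by simpa [hb, h2] using hcoeff
  grind

theorem bijective_quintic_odd_iff {k : ℕ} (hK : Fintype.card K = 5 ^ k) {b : K} (hb : b ≠ 0)
    (c : K) : Bijective (fun x => (quintic 0 b 0 c).eval x) ↔
      (-b ^ 2 = c ∧ ¬∃ x : K, x ^ 2 = 2 * b) ∨ (k = 1 ∧ (b = 2 ∨ b = -2) ∧ c = 4) := by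
  have : Fact (Nat.Prime 5) := ⟨Nat.prime_five⟩
  have : CharP K 5 := charP_of_card_eq_prime_pow hK
  have hneg : Bijective (fun x => (quintic 0 b 0 (-b ^ 2)).eval x) ↔ ¬∃ x : K, x ^ 2 = 2 * b :=
    Finite.injective_iff_bijective.symm.trans (injective_quintic_neg_sq_iff hb)
  have h4 : (4 : K) = -1 := by grind
  constructor
  · intro hf
    rcases k with _ | _ | k
    · exact absurd hK Fintype.one_lt_card.ne'
    · have hc : c = -1 := (bijective_quintic_odd_iff_of_card_eq_five hK hb).1 hf
      have hb4 : b ^ 4 = 1 := by simpa [hK] using FiniteField.pow_card_sub_one_eq_one b hb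
      rcases (by grind : b ^ 2 = 1 ∨ b = 2 ∨ b = -2) with hb2 | hb2
      · left
        obtain rfl : -b ^ 2 = c := by rw [hb2, hc]
        exact ⟨rfl, hneg.1 hf⟩
      · exact .inr ⟨rfl, hb2, hc.trans h4.symm⟩
    · obtain rfl := eq_neg_sq_of_bijective_quintic_odd hK hb hf
      exact .inl ⟨rfl, hneg.1 hf⟩
  · rintro (⟨rfl, hns⟩ | ⟨rfl, -, rfl⟩)
    · exact hneg.2 hns
    · exact (bijective_quintic_odd_iff_of_card_eq_five hK hb).2 h4

end OddQuintics

section Classification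

variable {K : Type*} [Field K] [Fintype K]

lemma bijective_quintic_zero_zero_iff {k : ℕ} (hK : Fintype.card K = 5 ^ k) (l₃ : K) {l₄ : K}
    (hl₄ : l₄ ≠ 0) : Bijective (fun x => (quintic 0 0 l₃ l₄).eval x) ↔
      l₃ = 0 ∧ ¬∃ x : K, x ^ 4 = -l₄ := by
  have : Fact (Nat.Prime 5) := ⟨Nat.prime_five⟩
  have : CharP K 5 := charP_of_card_eq_prime_pow hK
  rw [← Finite.injective_iff_bijective]
  have hadd : (fun x => (quintic 0 0 0 l₄).eval x) = fun x => x ^ 5 + l₄ * x := by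
    simp [eval_quintic]
  constructor
  · intro hf
    obtain rfl := eq_zero_of_injective_quintic_zero_zero hf
    rw [hadd] at hf
    exact ⟨rfl, (injective_pow_char_add_mul_iff hl₄).1 hf⟩
  · rintro ⟨rfl, hns⟩
    rw [hadd]
    exact (injective_pow_char_add_mul_iff hl₄).2 hns

theorem bijective_quintic_iff {k : ℕ} (hK : Fintype.card K = 5 ^ k) (l₁ l₂ l₃ : K) {l₄ : K}
    (hl₄ : l₄ ≠ 0) : Bijective (fun x => (quintic l₁ l₂ l₃ l₄).eval x) ↔
      (l₁ = 0 ∧ l₂ = 0 ∧ l₃ = 0 ∧ ¬∃ x : K, x ^ 4 = -l₄) ∨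
      (l₁ = 0 ∧ l₂ ≠ 0 ∧ -l₂ ^ 2 = l₄ + 3 * l₃ ^ 2 * l₂⁻¹ ∧ ¬∃ x : K, x ^ 2 = 2 * l₂) ∨
      (k = 1 ∧ l₁ = 0 ∧ (l₂ = 2 ∨ l₂ = -2) ∧ l₄ + 3 * l₃ ^ 2 * l₂⁻¹ = 4) := by
  have : Fact (Nat.Prime 5) := ⟨Nat.prime_five⟩
  have : CharP K 5 := charP_of_card_eq_prime_pow hK
  by_cases hl₁ : l₁ = 0
  · subst hl₁
    by_cases hl₂ : l₂ = 0
    · subst hl₂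
      have h2 : (2 : K) ≠ 0 := by grind
      rw [bijective_quintic_zero_zero_iff hK l₃ hl₄]
      simp [h2, h2.symm]
    · rw [bijective_quintic_iff_bijective_odd hl₂, bijective_quintic_odd_iff hK hl₂]
      simp [hl₂]
  · have hnot : ¬Bijective fun x => (quintic l₁ l₂ l₃ l₄).eval x := fun hf => hl₁ <| by
      simpa [quintic, coeff_X_pow, coeff_X] using
        coeff_eq_zero_of_bijective_eval (by norm_num) hK (natDegree_quintic_le l₁ l₂ l₃ l₄) hf
    rw [iff_false_left hnot]
    simp [hl₁]

end Classification

section NormReduction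

variable {G M : Type*} [GroupWithZero G] [GroupWithZero M] {N : G →* M}

lemma map_eq_zero_iff_of_surjective (hN : Surjective N) {x : G} : N x = 0 ↔ x = 0 := by
  constructor
  · contrapose!
    exact fun hx => (hx.isUnit.map N).ne_zero
  · rintro rfl
    obtain ⟨x, hx⟩ := hN 0
    rw [← mul_zero (N 0), ← hx, ← map_mul, zero_mul]

lemma exists_map_eq_one_of_map_eq (hN : Surjective N) {x z : G} (hxz : N x = N z) :
    ∃ u, N u = 1 ∧ u * x = z := by
  rcases eq_or_ne x 0 with rfl | hx
  · have hz : z = 0 := by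
      rwa [(map_eq_zero_iff_of_surjective hN).2 rfl, eq_comm,
        map_eq_zero_iff_of_surjective hN] at hxz
    exact ⟨1, map_one N, by rw [hz, mul_zero]⟩
  · have hNx : N x ≠ 0 := fun h => hx ((map_eq_zero_iff_of_surjective hN).1 h)
    have hzx : z / x * x = z := div_mul_cancel₀ z hx
    exact ⟨z / x, mul_right_cancel₀ hNx (by rw [← map_mul, hzx, one_mul, hxz]), hzx⟩

theorem injective_mul_comp_iff (hN : Surjective N) (φ : M → G) :
    Injective (fun x => x * φ (N x)) ↔ Injective fun y => y * N (φ y) := by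
  constructor
  · intro hf y z hyz
    obtain ⟨x, rfl⟩ := hN y
    obtain ⟨w, rfl⟩ := hN z
    simp only [← map_mul] at hyz
    obtain ⟨u, hu, huw⟩ := exists_map_eq_one_of_map_eq hN hyz
    have hNu : N (u * x) = N x := by rw [map_mul, hu, one_mul]
    have hux : u * x = w := hf <| by
      simpa only [hNu, mul_assoc] using huw
    rw [← hux, hNu]
  · intro hf x z hxz
    have hNxz : N x = N z := hf <| by
      simpa only [map_mul] using congrArg N hxz
    by_cases hφ : φ (N x) = 0
    · have hNx : N x = 0 := hf <| by
        simp only [hφ, (map_eq_zero_iff_of_surjective hN).2, mul_zero, zero_mul]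
      rw [(map_eq_zero_iff_of_surjective hN).1 hNx,
        (map_eq_zero_iff_of_surjective hN).1 (hNxz.symm.trans hNx)]
    · simp only [← hNxz] at hxz
      exact mul_right_cancel₀ hφ hxz

end NormReduction

/-- The polynomial `X * ∏ (X + C aᵢ)` over the first `r` iterates `aᵢ = a ^ q ^ i` of `a` under
`x ↦ x ^ q`. When these are the conjugates of `a` over a subfield with `q` elements, it induces the
map `y ↦ y * N(y + a)` on that subfield, with `N` the norm. -/
noncomputable def conjugatePolynomial {R : Type*} [CommSemiring R] (q r : ℕ) (a : R) : R[X] :=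
  X * ∏ i ∈ range r, (X + C (a ^ q ^ i))

section FiniteFieldNorm

variable {K F : Type*} [Field K] [Field F] [Finite F] [Algebra K F]

open Module Algebra

lemma injective_mul_norm_iff :
    Injective (fun x : F => x * algebraMap K F (norm K x)) ↔
      Injective fun y : K => y ^ (finrank K F + 1) := by
  rw [injective_mul_comp_iff (FiniteField.norm_surjective K F) (algebraMap K F)]
  simp only [Algebra.norm_algebraMap, pow_succ']

lemma injective_mul_norm_add_iff (a : F) :
    Injective (fun x : F => x * (algebraMap K F (norm K x) + a)) ↔
      Injective fun y : K => y * norm K (algebraMap K F y + a) :=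
  injective_mul_comp_iff (FiniteField.norm_surjective K F) (algebraMap K F · + a)

lemma pow_succ_eq_mul_norm (x : F) :
    x ^ ((Nat.card F - 1) / (Nat.card K - 1) + 1) = x * algebraMap K F (norm K x) := by
  rw [FiniteField.algebraMap_norm_eq_pow, pow_succ']

lemma eval_eq_mul_norm_add {q r : ℕ} (hq : Nat.card K = q) (hr : finrank K F = r)
    {f : K[X]} {a : F} (hf : f.map (algebraMap K F) = conjugatePolynomial q r a) (y : K) :
    f.eval y = y * norm K (algebraMap K F y + a) := by
  subst hq hr
  have : Finite K := Finite.of_injective _ (algebraMap K F).injective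
  have : Fintype K := Fintype.ofFinite K
  have hfrob : ∀ (i : ℕ) (x : F), (FiniteField.frobeniusAlgHom K F ^ i) x = x ^ Nat.card K ^ i := by
    intro i x
    rw [AlgHom.coe_pow, FiniteField.coe_frobeniusAlgHom, pow_iterate, Nat.card_eq_fintype_card]
  apply (algebraMap K F).injective
  calc algebraMap K F (f.eval y)
      = algebraMap K F y * ∏ i ∈ range (finrank K F), (algebraMap K F y + a ^ Nat.card K ^ i) := by
        rw [← eval_map_apply, hf, conjugatePolynomial]
        simp only [eval_mul, eval_X, eval_prod, eval_add, eval_C]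
    _ = algebraMap K F y * ∏ i ∈ range (finrank K F), (algebraMap K F y + a) ^ Nat.card K ^ i := by
        simp only [← hfrob, map_add, AlgHom.commutes]
    _ = algebraMap K F (y * norm K (algebraMap K F y + a)) := by
        rw [map_mul, FiniteField.algebraMap_norm_eq_prod_pow]

theorem bijective_inv_mul_pow_and_add_iff {q r : ℕ} (hq : Nat.card K = q) (hr : finrank K F = r)
    (hpow : Injective fun y : K => y ^ (r + 1)) {a : F} (ha : a ≠ 0) {f : K[X]}
    (hf : f.map (algebraMap K F) = conjugatePolynomial q r a) :
    (Bijective (fun x : F => a⁻¹ * x ^ ((Nat.card F - 1) / (q - 1) + 1)) ∧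
      Bijective fun x : F => a⁻¹ * x ^ ((Nat.card F - 1) / (q - 1) + 1) + x) ↔
      Bijective fun y => f.eval y := by
  have : Finite K := Finite.of_injective _ (algebraMap K F).injective
  have hadd : (fun x : F => a⁻¹ * (x * algebraMap K F (norm K x)) + x) =
      (a⁻¹ * ·) ∘ fun x => x * (algebraMap K F (norm K x) + a) := by
    funext x
    simp only [comp_apply]
    field_simp
  have hinj : Injective (a⁻¹ * · : F → F) := mul_right_injective₀ (inv_ne_zero ha)
  simp only [← hq, pow_succ_eq_mul_norm, ← Finite.injective_iff_bijective, hadd, hinj.of_comp_iff,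
    injective_mul_norm_add_iff, ← eval_eq_mul_norm_add hq hr hf, and_iff_right_iff_imp]
  exact fun _ => hinj.comp (injective_mul_norm_iff.2 (hr ▸ hpow))

end FiniteFieldNorm

section FrobeniusFixedField

variable {F : Type*} [Field F] (p m : ℕ)

/-- The subfield of `F` of all `x` with `x ^ p ^ m = x`: a copy of the field with `p ^ m` elements
whenever `F` contains one. -/
def frobeniusFixedField [ExpChar F p] : Subfield F :=
  (iterateFrobenius F p m).eqLocusField (RingHom.id F)

variable {p m}

lemma mem_frobeniusFixedField [ExpChar F p] {x : F} :
    x ∈ frobeniusFixedField p m ↔ x ^ p ^ m = x := by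
  rw [frobeniusFixedField, RingHom.mem_eqLocusField, iterateFrobenius_def, RingHom.id_apply]

lemma exists_pow_eq_self_and_iff [ExpChar F p] {P : F → Prop} :
    (∃ x, x ^ p ^ m = x ∧ P x) ↔ ∃ x : (frobeniusFixedField p m : Subfield F), P x := by
  simp only [Subtype.exists, mem_frobeniusFixedField, exists_prop]

lemma card_frobeniusFixedField [Fintype F] [Fact p.Prime] [CharP F p] {n : ℕ}
    (hF : Fintype.card F = p ^ n) (hm : m ≠ 0) (hmn : m ∣ n) :
    Nat.card (frobeniusFixedField p m : Subfield F) = p ^ m := by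
  classical
  have hpm : 1 < p ^ m := Nat.one_lt_pow hm (Fact.out (p := p.Prime)).one_lt
  have hdvd : (X ^ p ^ m - X : F[X]) ∣ X ^ Nat.card F - X := by
    rw [Nat.card_eq_fintype_card, hF]
    exact dvd_pow_pow_sub_self_of_dvd hmn
  have hsplits : (X ^ p ^ m - X : F[X]).Splits := (splits_X_pow_nat_card_sub_X (K := F)).of_dvd
    (FiniteField.X_pow_card_sub_X_ne_zero F Finite.one_lt_card) hdvd
  have hroots : (X ^ p ^ m - X : F[X]).rootSet F = (frobeniusFixedField p m : Subfield F) := by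
    ext x
    simp [mem_rootSet, FiniteField.X_pow_card_sub_X_ne_zero F hpm, mem_frobeniusFixedField,
      sub_eq_zero]
  calc Nat.card (frobeniusFixedField p m : Subfield F)
      = Fintype.card ((X ^ p ^ m - X : F[X]).rootSet F) := by
        rw [← Nat.card_eq_fintype_card, hroots, SetLike.coe_sort_coe]
    _ = p ^ m := by
        rw [card_rootSet_eq_natDegree (galois_poly_separable p _ (dvd_pow_self p hm))
          (by rwa [Algebra.algebraMap_self, Polynomial.map_id]),
          FiniteField.X_pow_card_sub_X_natDegree_eq F hpm]

lemma finrank_frobeniusFixedField [Fintype F] [Fact p.Prime] [CharP F p] {r : ℕ}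
    (hF : Fintype.card F = p ^ (r * m)) (hm : m ≠ 0) :
    Module.finrank (frobeniusFixedField p m : Subfield F) F = r := by
  have hp := Fact.out (p := p.Prime)
  have hcard := Module.natCard_eq_pow_finrank (K := (frobeniusFixedField p m : Subfield F)) (V := F)
  rw [Nat.card_eq_fintype_card, hF, card_frobeniusFixedField hF hm (Nat.dvd_mul_left m r),
    ← pow_mul] at hcard
  have hmul := Nat.pow_right_injective hp.two_le hcard
  rw [mul_comm] at hmul
  exact (Nat.eq_of_mul_eq_mul_left (Nat.pos_of_ne_zero hm) hmul).symm

lemma map_iterateFrobenius_conjugatePolynomial [ExpChar F p] {r : ℕ} {a : F}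
    (ha : a ^ (p ^ m) ^ r = a) : (conjugatePolynomial (p ^ m) r a).map (iterateFrobenius F p m) =
      conjugatePolynomial (p ^ m) r a := by
  have hshift : ∀ i, iterateFrobenius F p m (a ^ (p ^ m) ^ i) = a ^ (p ^ m) ^ (i + 1) := by
    intro i
    rw [iterateFrobenius_def, ← pow_mul, ← pow_succ]
  simp only [conjugatePolynomial, Polynomial.map_mul, Polynomial.map_prod, Polynomial.map_add,
    map_X, map_C, hshift]
  rcases r with _ | r
  · rfl
  · rw [prod_range_succ, ha, prod_range_succ' _ r, pow_zero, pow_one]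

lemma coeff_conjugatePolynomial_mem [ExpChar F p] {r : ℕ} {a : F} (ha : a ^ (p ^ m) ^ r = a)
    (i : ℕ) : (conjugatePolynomial (p ^ m) r a).coeff i ∈ frobeniusFixedField p m := by
  rw [frobeniusFixedField, RingHom.mem_eqLocusField, RingHom.id_apply, ← coeff_map,
    map_iterateFrobenius_conjugatePolynomial ha]

end FrobeniusFixedField

section ConjugateQuintic

variable {R : Type*} [CommSemiring R]

lemma conjugatePolynomial_four_eq_quintic (q : ℕ) (a : R) :
    conjugatePolynomial q 4 a =
      quintic (a + a ^ q + a ^ q ^ 2 + a ^ q ^ 3)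
        (a * a ^ q + a * a ^ q ^ 2 + a * a ^ q ^ 3 + a ^ q * a ^ q ^ 2 + a ^ q * a ^ q ^ 3 +
          a ^ q ^ 2 * a ^ q ^ 3)
        (a * a ^ q * a ^ q ^ 2 + a * a ^ q * a ^ q ^ 3 + a * a ^ q ^ 2 * a ^ q ^ 3 +
          a ^ q * a ^ q ^ 2 * a ^ q ^ 3)
        (a * a ^ q * a ^ q ^ 2 * a ^ q ^ 3) := by
  simp only [conjugatePolynomial, quintic, prod_range_succ, prod_range_zero, pow_zero, pow_one,
    one_mul, map_add, map_mul]
  ring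

lemma map_quintic {S : Type*} [CommSemiring S] (φ : R →+* S) (l₁ l₂ l₃ l₄ : R) :
    (quintic l₁ l₂ l₃ l₄).map φ = quintic (φ l₁) (φ l₂) (φ l₃) (φ l₄) := by
  simp [quintic]

lemma exists_coe_eq_of_conjugatePolynomial_eq_quintic {F : Type*} [Field F] {p m r : ℕ}
    [ExpChar F p] {a l₁ l₂ l₃ l₄ : F} (ha : a ^ (p ^ m) ^ r = a)
    (hl : conjugatePolynomial (p ^ m) r a = quintic l₁ l₂ l₃ l₄) :
    ∃ b₁ b₂ b₃ b₄ : (frobeniusFixedField p m : Subfield F),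
      (b₁ : F) = l₁ ∧ (b₂ : F) = l₂ ∧ (b₃ : F) = l₃ ∧ (b₄ : F) = l₄ := by
  have hmem := coeff_conjugatePolynomial_mem ha
  rw [hl] at hmem
  refine ⟨⟨_, hmem 4⟩, ⟨_, hmem 3⟩, ⟨_, hmem 2⟩, ⟨_, hmem 1⟩, ?_⟩
  simp [quintic, coeff_X_pow]

end ConjugateQuintic

end CompletePermutation

open CompletePermutation

/-- **Theorem (p = 5, r = 4).** Let `k ≥ 1`, `n = 4k`, `d = (5^{4k} - 1)/(5^k - 1) + 1`,
and let `F` be the finite field with `5^n` elements. For `a ∈ F`, `a ≠ 0`, let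
`λ₁, λ₂, λ₃, λ₄` be the elementary symmetric functions of `a, a^{5^k}, a^{5^{2k}},
a^{5^{3k}}`. Then `a⁻¹ x^d` is a complete permutation polynomial over `F` iff one of
the three listed conditions holds, where "fourth power" and "square" are taken in the
subfield `F_{5^k} = {x : F | x^{5^k} = x}`. -/
theorem stmt_7 (k : ℕ) (hk : 0 < k)
    (n : ℕ) (hn : n = 4 * k) (d : ℕ) (hd : d = (5 ^ (4 * k) - 1) / (5 ^ k - 1) + 1)
    (F : Type*) [Field F] [Fintype F] (hF : Fintype.card F = 5 ^ n)
    (a : F) (ha : a ≠ 0)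
    (a0 a1 a2 a3 : F) (ha0 : a0 = a) (ha1 : a1 = a ^ (5 ^ k))
    (ha2 : a2 = a ^ (5 ^ (2 * k))) (ha3 : a3 = a ^ (5 ^ (3 * k)))
    (l1 l2 l3 l4 : F)
    (hl1 : l1 = a0 + a1 + a2 + a3)
    (hl2 : l2 = a0 * a1 + a0 * a2 + a0 * a3 + a1 * a2 + a1 * a3 + a2 * a3)
    (hl3 : l3 = a0 * a1 * a2 + a0 * a1 * a3 + a0 * a2 * a3 + a1 * a2 * a3)
    (hl4 : l4 = a0 * a1 * a2 * a3) :
    (Function.Bijective (fun x : F => a⁻¹ * x ^ d) ∧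
     Function.Bijective (fun x : F => a⁻¹ * x ^ d + x)) ↔
    ((l1 = 0 ∧ l2 = 0 ∧ l3 = 0 ∧
        ¬∃ x : F, x ^ (5 ^ k) = x ∧ x ^ 4 = -l4) ∨
     (l1 = 0 ∧ l2 ≠ 0 ∧ -l2 ^ 2 = l4 + 3 * l3 ^ 2 * l2⁻¹ ∧
        ¬∃ x : F, x ^ (5 ^ k) = x ∧ x ^ 2 = 2 * l2) ∨
     (k = 1 ∧ l1 = 0 ∧ (l2 = 2 ∨ l2 = -2) ∧ l4 + 3 * l3 ^ 2 * l2⁻¹ = 4)) := by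
  subst hn
  have : Fact (Nat.Prime 5) := ⟨Nat.prime_five⟩
  have : CharP F 5 := charP_of_card_eq_prime_pow hF
  have hconj : conjugatePolynomial (5 ^ k) 4 a = quintic l1 l2 l3 l4 := by
    simp only [conjugatePolynomial_four_eq_quintic, hl1, hl2, hl3, hl4, ha0, ha1, ha2, ha3,
      pow_mul']
  have hfix : a ^ (5 ^ k) ^ 4 = a := by
    rw [← pow_mul', ← hF, FiniteField.pow_card]
  have hl4_ne : l4 ≠ 0 := by simp [hl4, ha0, ha1, ha2, ha3, ha]
  obtain ⟨l1, l2, l3, l4, rfl, rfl, rfl, rfl⟩ :=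
    exists_coe_eq_of_conjugatePolynomial_eq_quintic hfix hconj
  let K : Subfield F := frobeniusFixedField 5 k
  have hK : Nat.card K = 5 ^ k := card_frobeniusFixedField hF hk.ne' (Nat.dvd_mul_left k 4)
  have hr : Module.finrank K F = 4 := finrank_frobeniusFixedField hF hk.ne'
  have hd' : d = (Nat.card F - 1) / (5 ^ k - 1) + 1 := by rw [hd, Nat.card_eq_fintype_card, hF]
  have hmap : (quintic l1 l2 l3 l4).map (algebraMap K F) = conjugatePolynomial (5 ^ k) 4 a := by
    rw [map_quintic, hconj]
    rfl
  have : Fintype K := Fintype.ofFinite K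
  rw [hd', bijective_inv_mul_pow_and_add_iff hK hr (frobenius_inj K 5) ha hmap,
    bijective_quintic_iff (Nat.card_eq_fintype_card.symm.trans hK) l1 l2 l3 (mod_cast hl4_ne)]
  simp only [exists_pow_eq_self_and_iff, Subtype.ext_iff, ne_eq]
  -- Numerals of `K` coerce to those of `F` by definition.
  rfl
end

section
/- Let k be a positive integer, n = 4k, and d = (5^{4k} - 1)/(5^k - 1) + 1. If a ∈ F_{5^n} satisfies a^{2(5^k - 1)} = -1 or a^{5^k - 1} = -1, then a^{-1}x^d is a complete permutation polynomial over F_{5^n}; that is, both x ↦ a^{-1}x^d and x ↦ a^{-1}x^d + x are bijections of F_{5^n}. -/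
/-!
Write `q = 5 ^ k`, let `σ` be the `q`-power Frobenius of `F` and `N x = x · σ x · σ² x · σ³ x`,
so that `x ^ d = x * N x`. Both maps have the shape `x ↦ x * h (N x)`. Such a map is injective as
soon as the map `t ↦ t * N (h t)` it induces on the norms is, because applying `N` recovers `N x`,
and then `x` by cancellation.

For `x ^ d` the induced map is `t ↦ t ^ 5`. For `b * x ^ d + x` with `b = a⁻¹` and
`c = b ^ (q - 1)`, the substitution `u = b * t` turns it into `u * ∏ i < 4, (1 + c ^ i * u)` on the
eigenspace `σ u = c * u`. This is the additive polynomial `u - u ^ 5` when `c ^ 2 = -1`, and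
`u * (1 - u ^ 2) ^ 2` when `c = -1`. In both cases a failure of injectivity would produce a nonzero
element of the prime field in the eigenspace; but `σ` fixes the prime field, and `c ≠ 1`.
-/

open Finset Function

theorem injective_mul_comp_of_injOn {M K : Type*} [MulZeroOneClass M] [IsRightCancelMulZero M]
    [MulOneClass K] (N : M →* K) (h : K → M) (hh : ∀ x ≠ 0, h (N x) ≠ 0)
    (hN : Set.InjOn (fun t => t * N (h t)) (Set.range N)) :
    Injective (fun x => x * h (N x)) := by
  intro x y (hxy : x * h (N x) = y * h (N y))
  have hNxy : N x = N y :=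
    hN ⟨x, rfl⟩ ⟨y, rfl⟩ (by simpa only [map_mul] using congrArg N hxy)
  rw [← hNxy] at hxy
  by_cases h0 : h (N x) = 0
  · have hx : x = 0 := not_not.1 (mt (hh x) (not_not.2 h0))
    have hy : y = 0 := not_not.1 (mt (hh y) (not_not.2 (hNxy ▸ h0)))
    rw [hx, hy]
  · exact mul_right_cancel₀ h0 hxy

section CyclicNorm

variable {R : Type*} [CommSemiring R] (σ : R →+* R)

/-- The norm `x ↦ x · σ x ⋯ σ^(m-1) x` of a ring endomorphism `σ`. It is meant for `σ ^ m = 1`,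
where it takes values in the subring fixed by `σ`; when `σ` is the `q`-power Frobenius of the field
with `q ^ m` elements, it is the norm to the field with `q` elements. -/
def cyclicNorm (m : ℕ) : R →* R :=
  ∏ i ∈ range m, ((σ ^ i : R →+* R) : R →* R)

theorem cyclicNorm_apply (m : ℕ) (x : R) : cyclicNorm σ m x = ∏ i ∈ range m, (σ ^ i) x := by
  simp only [cyclicNorm, MonoidHom.finsetProd_apply, MonoidHom.coe_coe]

variable {σ}

theorem map_cyclicNorm {m : ℕ} (hσ : σ ^ m = 1) (x : R) :
    σ (cyclicNorm σ m x) = cyclicNorm σ m x := by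
  have hsucc (i : ℕ) : σ ((σ ^ i) x) = (σ ^ (i + 1)) x := by
    rw [pow_succ', RingHom.coe_mul, comp_apply]
  simp only [cyclicNorm_apply, map_prod, hsucc]
  cases m with
  | zero => rfl
  | succ m => rw [prod_range_succ, hσ, prod_range_succ', pow_zero]

theorem pow_apply_of_apply_eq_mul {c u : R} (hc : σ c = c) (hu : σ u = c * u) (i : ℕ) :
    (σ ^ i) u = c ^ i * u := by
  induction i with
  | zero => simp
  | succ i ih =>
    rw [pow_succ', RingHom.coe_mul, comp_apply, ih, map_mul, map_pow, hc, hu, pow_succ, mul_assoc]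

theorem cyclicNorm_of_apply_eq_self {t : R} (ht : σ t = t) (m : ℕ) :
    cyclicNorm σ m t = t ^ m := by
  have hpow (i : ℕ) : (σ ^ i) t = t := by
    simpa using pow_apply_of_apply_eq_mul (map_one σ) (by rwa [one_mul]) i
  simp only [cyclicNorm_apply, hpow, prod_const, card_range]

theorem cyclicNorm_one_add {c u : R} (hc : σ c = c) (hu : σ u = c * u) (m : ℕ) :
    cyclicNorm σ m (1 + u) = ∏ i ∈ range m, (1 + c ^ i * u) := by
  simp only [cyclicNorm_apply, map_add, map_one, pow_apply_of_apply_eq_mul hc hu]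

end CyclicNorm

section Frobenius

variable (p k m : ℕ)

theorem iterateFrobenius_pow_apply {R : Type*} [CommSemiring R] [ExpChar R p] (x : R) :
    (iterateFrobenius R p k ^ m) x = x ^ (p ^ k) ^ m := by
  rw [RingHom.coe_pow, ← iterateFrobenius_mul_apply, iterateFrobenius_def, pow_mul]

theorem cyclicNorm_iterateFrobenius {R : Type*} [CommSemiring R] [Fact p.Prime] [CharP R p]
    (hk : k ≠ 0) (x : R) :
    cyclicNorm (iterateFrobenius R p k) m x = x ^ (((p ^ k) ^ m - 1) / (p ^ k - 1)) := by
  have hq : 1 < p ^ k := Nat.one_lt_pow hk (Fact.out : p.Prime).one_lt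
  simp only [cyclicNorm_apply, iterateFrobenius_pow_apply, prod_pow_eq_pow_sum,
    Nat.geomSum_eq hq]

theorem iterateFrobenius_pow_eq_one {F : Type*} [Field F] [Fintype F] [ExpChar F p]
    (hF : Fintype.card F = (p ^ k) ^ m) : iterateFrobenius F p k ^ m = 1 := by
  ext x
  rw [iterateFrobenius_pow_apply, ← hF, FiniteField.pow_card, RingHom.one_def, RingHom.id_apply]

end Frobenius

section Eigenspace

variable {F : Type*} [Field F] (p : ℕ) [Fact p.Prime] [CharP F p] {σ : F →+* F} {c : F}

variable (σ) in
theorem map_eq_self_of_pow_char_eq_self {x : F} (hx : x ^ p = x) : σ x = x :=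
  (bot_le : ⊥ ≤ σ.eqLocusField (RingHom.id F)) ((Subfield.mem_bot_iff_pow_eq_self F p).2 hx)

theorem eq_zero_of_apply_eq_mul_of_pow_char_eq_self (hc : c ≠ 1) {u : F} (hu : σ u = c * u)
    (hup : u ^ p = u) : u = 0 := by
  by_contra hu0
  rw [map_eq_self_of_pow_char_eq_self p σ hup] at hu
  exact hc ((mul_eq_right₀ hu0).1 hu.symm)

theorem injOn_sub_pow_char (hc : c ≠ 1) :
    Set.InjOn (fun u => u - u ^ p) {u : F | σ u = c * u} := by
  intro u (hu : σ u = c * u) v (hv : σ v = c * v) huv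
  refine sub_eq_zero.1 (eq_zero_of_apply_eq_mul_of_pow_char_eq_self p hc (σ := σ) ?_ ?_)
  · rw [map_sub, hu, hv, mul_sub]
  · rw [sub_pow_char]
    linear_combination -huv

end Eigenspace

theorem eq_zero_of_sq_eq_sq_of_map_eq_neg {R : Type*} [CommRing R] [IsDomain R]
    (hR : ringChar R ≠ 2) {σ : R →+* R} {s r : R} (hs : σ s = s) (hr : σ r = -r)
    (hsr : s ^ 2 = r ^ 2) : s = 0 := by
  have hneg : σ s = -s := by
    rcases sq_eq_sq_iff_eq_or_eq_neg.1 hsr with rfl | rfl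
    · exact hr
    · rw [map_neg, hr]
  exact (Ring.eq_self_iff_eq_zero_of_char_ne_two hR).1 (hneg.symm.trans hs)

theorem injOn_mul_one_sub_sq_sq {F : Type*} [Field F] [CharP F 5] (σ : F →+* F) :
    Set.InjOn (fun u => u * (1 - u ^ 2) ^ 2) {u : F | σ u = -u} := by
  intro u (hu : σ u = -u) v (hv : σ v = -v) (huv : u * (1 - u ^ 2) ^ 2 = v * (1 - v ^ 2) ^ 2)
  have h5 : (5 : F) = 0 := CharP.ofNat_eq_zero F 5
  have : Fact (Nat.Prime 5) := ⟨Nat.prime_five⟩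
  have hF : ringChar F ≠ 2 := (ringChar.eq F 5).trans_ne (by decide)
  by_contra hne
  -- Modulo 5 the difference quotient is a difference of two squares, and `σ` fixes the base of one
  -- and negates the base of the other.
  have hfactor : (u - v) * (((u - v) ^ 2 + 1) ^ 2 - (2 * (u + v)) ^ 2) = 0 := by
    linear_combination huv + h5 * (u * v * (v - u) * (u ^ 2 - u * v + v ^ 2 + 2))
  have hsq : ((u - v) ^ 2 + 1) ^ 2 = (2 * (u + v)) ^ 2 :=
    sub_eq_zero.1 ((mul_eq_zero.1 hfactor).resolve_left (sub_ne_zero.2 hne))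
  have heven : σ ((u - v) ^ 2 + 1) = (u - v) ^ 2 + 1 := by
    simp only [map_add, map_pow, map_sub, map_one, hu, hv]
    ring
  have hodd : σ (2 * (u + v)) = -(2 * (u + v)) := by
    simp only [map_mul, map_ofNat, map_add, hu, hv]
    ring
  have hzero : (u - v) ^ 2 + 1 = 0 := eq_zero_of_sq_eq_sq_of_map_eq_neg hF heven hodd hsq
  have hpow : (u - v) ^ 5 = u - v := by
    linear_combination (u - v) * ((u - v) ^ 2 - 1) * hzero
  have hdiff : σ (u - v) = -1 * (u - v) := by
    rw [map_sub, hu, hv]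
    ring
  exact hne <| sub_eq_zero.1 <| eq_zero_of_apply_eq_mul_of_pow_char_eq_self 5
    (Ring.neg_one_ne_one_of_char_ne_two hF) hdiff hpow

section RootsOfUnity

variable {R : Type*} [CommRing R]

theorem prod_range_sub_pow_mul_eq_pow_sub_pow [IsDomain R] {ζ : R} {n : ℕ} (hn : 0 < n)
    (hζ : IsPrimitiveRoot ζ n) (x y : R) :
    ∏ i ∈ range n, (x - ζ ^ i * y) = x ^ n - y ^ n := by
  classical
  have hroots : (Polynomial.nthRootsFinset n (1 : R)).val = (Multiset.range n).map (ζ ^ ·) := by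
    rw [Polynomial.nthRootsFinset, Multiset.toFinset_val,
      Multiset.dedup_eq_self.2 hζ.nthRoots_one_nodup, hζ.nthRoots_eq (one_pow n)]
    simp only [mul_one]
  rw [hζ.pow_sub_pow_eq_prod_sub_mul x y hn, prod_eq_multiset_prod, prod_eq_multiset_prod, hroots,
    Multiset.map_map, range_val]
  rfl

theorem isPrimitiveRoot_four_of_sq_eq_neg_one [Nontrivial R] (hR : ringChar R ≠ 2) {c : R}
    (hc : c ^ 2 = -1) : IsPrimitiveRoot c 4 := by
  have horder : orderOf c = 2 ^ (1 + 1) :=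
    orderOf_eq_prime_pow (by simpa [hc] using Ring.neg_one_ne_one_of_char_ne_two hR)
      (by linear_combination (c ^ 2 - 1) * hc)
  exact IsPrimitiveRoot.iff_orderOf.2 horder

end RootsOfUnity

section Norm

variable {F : Type*} [Field F] {σ : F →+* F} {b c : F} {m : ℕ}

theorem injective_mul_cyclicNorm (hσ : σ ^ m = 1) (hpow : Injective fun t : F => t ^ (m + 1)) :
    Injective fun x => x * cyclicNorm σ m x := by
  have hne (x : F) (hx : x ≠ 0) : cyclicNorm σ m x ≠ 0 := by
    simpa only [cyclicNorm_apply, prod_ne_zero_iff, map_ne_zero] using fun _ _ => hx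
  refine injective_mul_comp_of_injOn (cyclicNorm σ m) id hne ?_
  rintro _ ⟨x, rfl⟩ _ ⟨y, rfl⟩ hxy
  simp only [id, cyclicNorm_of_apply_eq_self (map_cyclicNorm hσ _), ← pow_succ'] at hxy
  exact hpow hxy

theorem injective_mul_cyclicNorm_add_self (hσ : σ ^ m = 1) (hb : b ≠ 0) (hσb : σ b = c * b)
    (hσc : σ c = c) (hc : c ≠ 1)
    (hinj : Set.InjOn (fun u => u * ∏ i ∈ range m, (1 + c ^ i * u)) {u | σ u = c * u}) :
    Injective fun x => b * (x * cyclicNorm σ m x) + x := by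
  have heigen (x : F) : σ (b * cyclicNorm σ m x) = c * (b * cyclicNorm σ m x) := by
    rw [map_mul, hσb, map_cyclicNorm hσ, mul_assoc]
  have hne (x : F) : 1 + b * cyclicNorm σ m x ≠ 0 := by
    intro h
    have hx := heigen x
    rw [eq_neg_of_add_eq_zero_right h, map_neg, map_one, mul_neg_one, neg_inj] at hx
    exact hc hx.symm
  have hinduced :
      Set.InjOn (fun t => t * cyclicNorm σ m (1 + b * t)) (Set.range (cyclicNorm σ m)) := by
    rintro _ ⟨x, rfl⟩ _ ⟨y, rfl⟩ hxy
    simp only [cyclicNorm_one_add hσc (heigen _)] at hxy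
    exact mul_left_cancel₀ hb (hinj (heigen x) (heigen y) (by simp only [mul_assoc b, hxy]))
  have hfun (x : F) :
      b * (x * cyclicNorm σ m x) + x = x * (1 + b * cyclicNorm σ m x) := by
    ring
  simpa only [hfun] using
    injective_mul_comp_of_injOn (cyclicNorm σ m) (1 + b * ·) (fun x _ => hne x) hinduced

theorem injective_mul_cyclicNorm_add_self_of_isPrimitiveRoot (p : ℕ) [Fact p.Prime] [CharP F p]
    (hp : p ≠ 2) (hσ : σ ^ (p - 1) = 1) (hb : b ≠ 0) (hσb : σ b = c * b)
    (hc : IsPrimitiveRoot c (p - 1)) :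
    Injective fun x => b * (x * cyclicNorm σ (p - 1) x) + x := by
  have hprime : p.Prime := Fact.out
  have hp2 : 2 < p := lt_of_le_of_ne hprime.two_le hp.symm
  have hc1 : c ≠ 1 := hc.ne_one (by lia)
  have hσc : σ c = c := map_eq_self_of_pow_char_eq_self p σ <| by
    rw [← pow_sub_one_mul hprime.ne_zero, hc.pow_eq_one, one_mul]
  have hprod (u : F) : u * ∏ i ∈ range (p - 1), (1 + c ^ i * u) = u - u ^ p := by
    have h := prod_range_sub_pow_mul_eq_pow_sub_pow (by lia) hc 1 (-u)
    simp only [mul_neg, sub_neg_eq_add, one_pow, (hprime.even_sub_one hp).neg_pow] at h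
    rw [h, mul_sub, mul_one, mul_pow_sub_one hprime.ne_zero]
  refine injective_mul_cyclicNorm_add_self hσ hb hσb hσc hc1 ?_
  simpa only [hprod] using injOn_sub_pow_char p hc1

theorem injective_mul_cyclicNorm_add_self_of_map_eq_neg [CharP F 5] (hσ : σ ^ 4 = 1) (hb : b ≠ 0)
    (hσb : σ b = -b) : Injective fun x => b * (x * cyclicNorm σ 4 x) + x := by
  have hc : (-1 : F) ≠ 1 :=
    Ring.neg_one_ne_one_of_char_ne_two ((ringChar.eq F 5).trans_ne (by decide))
  have hprod (u : F) : u * ∏ i ∈ range 4, (1 + (-1) ^ i * u) = u * (1 - u ^ 2) ^ 2 := by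
    simp only [prod_range_succ, prod_range_zero]
    ring
  refine injective_mul_cyclicNorm_add_self hσ hb (by rwa [neg_one_mul]) (by simp) hc ?_
  simpa only [hprod, neg_one_mul] using injOn_mul_one_sub_sq_sq σ

end Norm

/-- **Corollary.** Let `k ≥ 1`, `n = 4k`, `d = (5^{4k} - 1)/(5^k - 1) + 1`, and let `F`
be the finite field with `5^n` elements. If `a ∈ F` satisfies `a^(2(5^k - 1)) = -1` or
`a^(5^k - 1) = -1`, then `a⁻¹ x^d` is a complete permutation polynomial over `F`. -/
theorem stmt_8 (k : ℕ) (hk : 0 < k)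
    (n : ℕ) (hn : n = 4 * k) (d : ℕ) (hd : d = (5 ^ (4 * k) - 1) / (5 ^ k - 1) + 1)
    (F : Type*) [Field F] [Fintype F] (hF : Fintype.card F = 5 ^ n)
    (a : F) (ha : a ^ (2 * (5 ^ k - 1)) = -1 ∨ a ^ (5 ^ k - 1) = -1) :
    Function.Bijective (fun x : F => a⁻¹ * x ^ d) ∧
    Function.Bijective (fun x : F => a⁻¹ * x ^ d + x) := by
  have : Fact (Nat.Prime 5) := ⟨Nat.prime_five⟩
  have : CharP F 5 := charP_of_card_eq_prime_pow hF
  let σ : F →+* F := iterateFrobenius F 5 k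
  have hσ : σ ^ 4 = 1 := iterateFrobenius_pow_eq_one 5 k 4 (by rw [hF, hn, mul_comm, pow_mul])
  have hxd (x : F) : x ^ d = x * cyclicNorm σ 4 x := by
    rw [cyclicNorm_iterateFrobenius 5 k 4 hk.ne', ← pow_mul 5 k 4, mul_comm k, hd, pow_succ']
  have hb : a⁻¹ ≠ 0 := inv_ne_zero <| by
    rintro rfl
    have hq : 1 < 5 ^ k := Nat.one_lt_pow hk.ne' (by simp)
    simp [Nat.sub_ne_zero_of_lt hq] at ha
  have hσb : σ a⁻¹ = a⁻¹ ^ (5 ^ k - 1) * a⁻¹ := (pow_sub_one_mul (by positivity) _).symm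
  simp only [hxd, ← Finite.injective_iff_bijective]
  refine ⟨(mul_right_injective₀ hb).comp (injective_mul_cyclicNorm hσ (frobenius_inj F 5)), ?_⟩
  rcases ha with ha | ha
  · have hc : (a⁻¹ ^ (5 ^ k - 1)) ^ 2 = -1 := by
      rw [← pow_mul, mul_comm, inv_pow, ha, inv_neg_one]
    exact injective_mul_cyclicNorm_add_self_of_isPrimitiveRoot 5 (by decide) hσ hb hσb
      (isPrimitiveRoot_four_of_sq_eq_neg_one ((ringChar.eq F 5).trans_ne (by decide)) hc)
  · rw [inv_pow, ha, inv_neg_one, neg_one_mul] at hσb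
    exact injective_mul_cyclicNorm_add_self_of_map_eq_neg hσ hb hσb
end

section
/- Let k be a positive integer with gcd(k, 6) = 1, n = 6k, and d = (3^{6k} - 1)/(3^k - 1) + 1. Let β ∈ F_{3^n} satisfy β⁶ + β + 2 = 0, and write [x_0, x_1, x_2, x_3, x_4, x_5] for the element x_0 + x_1β + x_2β² + x_3β³ + x_4β⁴ + x_5β⁵ with x_i ∈ F_{3^k}. Then for every u ∈ F_{3^k} with u ≠ 0, the polynomial a^{-1}x^d is a complete permutation polynomial over F_{3^n} for each of the following a: [0,0,u,u,u,u], [0,u,0,0,u,-u], [0,u,0,-u,-u,0], [u,0,u,0,u,u], [u,0,-u,u,0,-u], [u,u,0,-u,u,u], [u,u,u,0,-u,0], [u,u,u,0,-u,-u], [u,u,-u,0,-u,-u], [u,u,-u,u,0,0], [u,-u,u,0,0,-u], [u,-u,-u,-u,u,-u]. -/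
/-- `vec6 β x₀ x₁ x₂ x₃ x₄ x₅ = x₀ + x₁β + x₂β² + x₃β³ + x₄β⁴ + x₅β⁵`,
the element written `[x₀, x₁, x₂, x₃, x₄, x₅]` in the basis `{1, β, …, β⁵}`. -/
def vec6 {F : Type*} [CommRing F] (β x0 x1 x2 x3 x4 x5 : F) : F :=
  x0 + x1 * β + x2 * β ^ 2 + x3 * β ^ 3 + x4 * β ^ 4 + x5 * β ^ 5

/-!
Put `ℓ = 7` and `q = 3 ^ k`, a primitive root modulo `ℓ`, so that `x ↦ x ^ q` permutes the
primitive `ℓ`-th roots of unity `ζ ∈ F` cyclically. Every listed `a` is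
`s * (1 - ζ) + t * (1 - ζ⁻¹)` for such a `ζ` and some `s, t` in the field `F_q` of `q` elements.

With `N` the norm from `F` to `F_q`, we have `x ^ d = x * N x`. Since `N` maps `F` into `F_q`,
injectivity of `x ↦ x * (N x + a)` follows from that of `y ↦ y * N (y + a)` on `F_q`. The latter
is the product of `y + s + t - ζ ^ j * s - ζ⁻¹ ^ j * t` over `j < ℓ`: the factor at `j = 0` is
`y`, the others are the conjugates of `y + a`. This product equals
`D (y + s + t) - (s ^ ℓ + t ^ ℓ)` for the Dickson polynomial `D` of degree `ℓ` and parameter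
`s * t`, and `D` permutes `F_q` because `ℓ` is coprime to `q ^ 2 - 1`.
-/

open Polynomial Finset

theorem exists_mul_eq_mul_add_one_of_coprime {n : ℕ} (hn : n ≠ 0) :
    ∀ {e : ℕ}, n.Coprime e → ∃ m j, n * m = e * j + 1
  | 0, h => ⟨1, 0, by simpa using h⟩
  | 1, _ => ⟨1, n - 1, by lia⟩
  | e + 2, h => by
    obtain ⟨m, -, hm⟩ := Nat.exists_mul_mod_eq_one_of_coprime h (by lia)
    exact ⟨m, n * m / (e + 2), by rw [← hm, Nat.div_add_mod]⟩

theorem pow_injOn_pow_eq_self {M : Type*} [Monoid M] {n q : ℕ} (hn : n ≠ 0)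
    (h : n.Coprime (q - 1)) : Set.InjOn (fun x : M ↦ x ^ n) {x | x ^ q = x} := by
  obtain rfl | hq := eq_or_ne q 0
  · obtain rfl : n = 1 := by simpa using h
    simp
  have pow_eq_self (x : M) (hx : x ^ q = x) (j : ℕ) : x ^ ((q - 1) * j + 1) = x := by
    induction j with
    | zero => simp
    | succ j ih =>
      rw [Nat.mul_succ, add_assoc, pow_add, Nat.sub_add_cancel (Nat.pos_of_ne_zero hq), hx,
        ← pow_succ, ih]
  obtain ⟨m, j, hmj⟩ := exists_mul_eq_mul_add_one_of_coprime hn h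
  intro x hx y hy hxy
  rw [← pow_eq_self x hx j, ← pow_eq_self y hy j, ← hmj, pow_mul, pow_mul]
  exact congrArg (· ^ m) hxy

theorem dickson_one_eval_add {R : Type*} [CommRing R] (s t : R) :
    ∀ n, (dickson 1 (s * t) n).eval (s + t) = s ^ n + t ^ n
  | 0 => by norm_num [dickson_zero]
  | 1 => by simp
  | n + 2 => by
    simp only [dickson_add_two, eval_sub, eval_mul, eval_X, eval_C,
      dickson_one_eval_add s t (n + 1), dickson_one_eval_add s t n]
    ring

theorem exists_add_eq_and_mul_eq {K : Type*} [Field K] [IsAlgClosed K] (x b : K) :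
    ∃ s t : K, s + t = x ∧ s * t = b := by
  obtain ⟨s, hs⟩ := IsAlgClosed.exists_root (C 1 * X ^ 2 + C (-x) * X + C b)
    (by rw [degree_quadratic one_ne_zero]; decide)
  simp only [IsRoot, eval_add, eval_mul, eval_pow, eval_C, eval_X] at hs
  exact ⟨s, x - s, by ring, by linear_combination -hs⟩

section DicksonPermutation

variable {F : Type*} [Field F] (p k : ℕ) [ExpChar F p]

theorem pow_sq_eq_self_of_add_of_mul {s t : F} (hadd : (s + t) ^ p ^ k = s + t)
    (hmul : (s * t) ^ p ^ k = s * t) : s ^ (p ^ k) ^ 2 = s := by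
  rw [add_pow_expChar_pow] at hadd
  rw [mul_pow] at hmul
  have hroot : (s ^ p ^ k - s) * (s ^ p ^ k - t) = 0 := by
    linear_combination s ^ p ^ k * hadd - hmul
  rw [sq, pow_mul]
  rcases mul_eq_zero.mp hroot with hs | hs
  · rw [sub_eq_zero.mp hs, sub_eq_zero.mp hs]
  · linear_combination hadd - hs + congrArg (· ^ p ^ k) (sub_eq_zero.mp hs)

theorem dickson_one_eval_injOn_of_isAlgClosed [IsAlgClosed F] {n : ℕ} (hn : n ≠ 0)
    (hcop : n.Coprime ((p ^ k) ^ 2 - 1)) {b : F} (hb : b ^ p ^ k = b) :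
    Set.InjOn (fun x ↦ (dickson 1 b n).eval x) {x | x ^ p ^ k = x} := by
  intro x hx y hy hxy
  obtain ⟨s, t, rfl, hst⟩ := exists_add_eq_and_mul_eq x b
  obtain ⟨s', t', rfl, hst'⟩ := exists_add_eq_and_mul_eq y b
  have fixed {v w : F} (hvw : v * w = b) (hadd : v + w ∈ {x | x ^ p ^ k = x}) :
      v ^ (p ^ k) ^ 2 = v ∧ w ^ (p ^ k) ^ 2 = w :=
    ⟨pow_sq_eq_self_of_add_of_mul p k hadd (hvw ▸ hb),
      pow_sq_eq_self_of_add_of_mul (t := v) p k (add_comm v w ▸ hadd) (mul_comm v w ▸ hvw ▸ hb)⟩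
  have hinj := pow_injOn_pow_eq_self (M := F) hn hcop
  have hpow_add : s ^ n + t ^ n = s' ^ n + t' ^ n := by
    simpa only [← dickson_one_eval_add, hst, hst'] using hxy
  have hpow_mul : s ^ n * t ^ n = s' ^ n * t' ^ n := by rw [← mul_pow, ← mul_pow, hst, hst']
  have hroot : (s ^ n - s' ^ n) * (s ^ n - t' ^ n) = 0 := by
    linear_combination s ^ n * hpow_add - hpow_mul
  rcases mul_eq_zero.mp hroot with h | h
  · have hs : s = s' := hinj (fixed hst hx).1 (fixed hst' hy).1 (sub_eq_zero.mp h)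
    have ht : t = t' := hinj (fixed hst hx).2 (fixed hst' hy).2 (by linear_combination hpow_add - h)
    rw [hs, ht]
  · have hs : s = t' := hinj (fixed hst hx).1 (fixed hst' hy).2 (sub_eq_zero.mp h)
    have ht : t = s' := hinj (fixed hst hx).2 (fixed hst' hy).1 (by linear_combination hpow_add - h)
    rw [hs, ht, add_comm]

theorem dickson_one_eval_injOn {n : ℕ} (hn : n ≠ 0)
    (hcop : n.Coprime ((p ^ k) ^ 2 - 1)) {b : F} (hb : b ^ p ^ k = b) :
    Set.InjOn (fun x ↦ (dickson 1 b n).eval x) {x | x ^ p ^ k = x} := by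
  intro x hx y hy hxy
  let ι := algebraMap F (AlgebraicClosure F)
  have : ExpChar (AlgebraicClosure F) p := expChar_of_injective_algebraMap ι.injective p
  have hfix {z : F} (hz : z ^ p ^ k = z) : ι z ^ p ^ k = ι z := by rw [← map_pow, hz]
  refine ι.injective (dickson_one_eval_injOn_of_isAlgClosed p k hn hcop (hfix hb) (hfix hx)
    (hfix hy) ?_)
  simpa only [← map_dickson ι, eval_map_apply] using congrArg ι hxy

end DicksonPermutation

section DicksonFactorization

variable {F : Type*} [Field F]

theorem prod_range_sub_pow_mul {n : ℕ} (hn : 0 < n) {ζ : F}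
    (hζ : IsPrimitiveRoot ζ n) (x y : F) :
    ∏ i ∈ range n, (x - ζ ^ i * y) = x ^ n - y ^ n := by
  simpa [eval_prod] using
    (congrArg (eval x) (X_pow_sub_C_eq_prod hζ hn (α := y) (a := y ^ n) rfl)).symm

theorem exists_eq_mul_of_mul_eq_mul {x y s t : F} (h : x * y = s * t) :
    ∃ a b c d : F, x = a * c ∧ y = b * d ∧ s = a * d ∧ t = b * c := by
  by_cases hx : x = 0
  · rcases mul_eq_zero.mp (h.symm.trans (by rw [hx, zero_mul])) with hs | ht
    · exact ⟨0, 1, t, y, by simp [hx], by simp, by simp [hs], by simp⟩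
    · exact ⟨s, y, 0, 1, by simp [hx], by simp, by simp, by simp [ht]⟩
  · exact ⟨x, t, 1, s / x, by simp, by field_simp; linear_combination h, by field_simp, by simp⟩

theorem prod_range_sub_sub_of_mul_eq_mul {n : ℕ} (hn : 0 < n) {ζ : F}
    (hζ : IsPrimitiveRoot ζ n) {x y s t : F} (h : x * y = s * t) :
    ∏ i ∈ range n, (x + y - ζ ^ i * s - (ζ ^ i)⁻¹ * t) = x ^ n + y ^ n - (s ^ n + t ^ n) := by
  obtain ⟨a, b, c, d, rfl, rfl, rfl, rfl⟩ := exists_eq_mul_of_mul_eq_mul h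
  -- With `x, y, s, t` as the entries of a rank-one matrix, each factor splits into linear ones.
  have hfactor (i : ℕ) : a * c + b * d - ζ ^ i * (a * d) - (ζ ^ i)⁻¹ * (b * c) =
      (a - ζ⁻¹ ^ i * b) * (c - ζ ^ i * d) := by
    have hζi : ζ ^ i ≠ 0 := pow_ne_zero i (hζ.ne_zero hn.ne')
    rw [inv_pow]
    field_simp
    ring
  simp only [hfactor]
  rw [prod_mul_distrib, prod_range_sub_pow_mul hn hζ.inv, prod_range_sub_pow_mul hn hζ]
  ring

theorem prod_range_sub_sub_eq_dickson {n : ℕ} (hn : 0 < n) {ζ : F}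
    (hζ : IsPrimitiveRoot ζ n) (w s t : F) :
    ∏ i ∈ range n, (w - ζ ^ i * s - (ζ ^ i)⁻¹ * t) =
      (dickson 1 (s * t) n).eval w - (s ^ n + t ^ n) := by
  let ι := algebraMap F (AlgebraicClosure F)
  obtain ⟨x, y, hadd, hmul⟩ := exists_add_eq_and_mul_eq (ι w) (ι s * ι t)
  apply ι.injective
  have hdickson : ι ((dickson 1 (s * t) n).eval w) = x ^ n + y ^ n := by
    rw [← eval_map_apply, map_dickson, map_mul, ← hadd, ← hmul, dickson_one_eval_add]
  simp only [map_prod, map_sub, map_add, map_mul, map_pow, map_inv₀, hdickson]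
  rw [← hadd, prod_range_sub_sub_of_mul_eq_mul hn (hζ.map_of_injective ι.injective) hmul]

end DicksonFactorization

section PrimitiveRootModPrime

variable {ℓ q : ℕ}

theorem pow_mod_injOn_range (hq : orderOf (q : ZMod ℓ) = ℓ - 1) :
    Set.InjOn (fun i ↦ q ^ i % ℓ) (range (ℓ - 1)) := by
  intro i hi j hj hij
  refine pow_injOn_Iio_orderOf (x := (q : ZMod ℓ)) (by simpa [hq] using hi)
    (by simpa [hq] using hj) ?_
  simpa only [← Nat.cast_pow] using (ZMod.natCast_eq_natCast_iff' _ _ _).mpr hij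

theorem not_dvd_of_orderOf_eq_sub_one (hℓ : ℓ.Prime) (hq : orderOf (q : ZMod ℓ) = ℓ - 1) :
    ¬ ℓ ∣ q := by
  intro h
  have := Fact.mk hℓ
  rw [(ZMod.natCast_eq_zero_iff q ℓ).mpr h, orderOf_zero] at hq
  have := hℓ.two_le
  lia

theorem image_pow_mod_eq_erase_zero (hℓ : ℓ.Prime) (hq : orderOf (q : ZMod ℓ) = ℓ - 1) :
    (range (ℓ - 1)).image (fun i ↦ q ^ i % ℓ) = (range ℓ).erase 0 := by
  apply eq_of_subset_of_card_le
  · intro j hj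
    obtain ⟨i, -, rfl⟩ := mem_image.mp hj
    refine mem_erase.mpr ⟨fun h ↦ ?_, mem_range.mpr (Nat.mod_lt _ hℓ.pos)⟩
    exact not_dvd_of_orderOf_eq_sub_one hℓ hq (hℓ.dvd_of_dvd_pow (Nat.dvd_of_mod_eq_zero h))
  · rw [card_image_of_injOn (pow_mod_injOn_range hq), card_erase_of_mem (by simpa using hℓ.pos),
      card_range, card_range]

theorem prod_range_pow_eq_mul_prod_range_pow_pow {M N : Type*} [Monoid M] [CommMonoid N]
    (hℓ : ℓ.Prime) (hq : orderOf (q : ZMod ℓ) = ℓ - 1) {ζ : M} (hζ : ζ ^ ℓ = 1) (f : M → N) :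
    ∏ i ∈ range ℓ, f (ζ ^ i) = f 1 * ∏ i ∈ range (ℓ - 1), f (ζ ^ q ^ i) := by
  rw [← mul_prod_erase _ _ (mem_range.mpr hℓ.pos), ← image_pow_mod_eq_erase_zero hℓ hq,
    prod_image (pow_mod_injOn_range hq), pow_zero]
  simp only [← pow_eq_pow_mod _ hζ]

theorem coprime_sq_sub_one_of_orderOf (hℓ : ℓ.Prime) (hℓ3 : 3 < ℓ)
    (hq : orderOf (q : ZMod ℓ) = ℓ - 1) : ℓ.Coprime (q ^ 2 - 1) := by
  rw [hℓ.coprime_iff_not_dvd]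
  intro hdvd
  have hq0 : q ≠ 0 := by rintro rfl; exact not_dvd_of_orderOf_eq_sub_one hℓ hq (dvd_zero ℓ)
  have hsq : (q : ZMod ℓ) ^ 2 = 1 := by
    have := (ZMod.natCast_eq_zero_iff _ _).mpr hdvd
    rwa [Nat.cast_pred (by positivity), Nat.cast_pow, sub_eq_zero] at this
  have := Nat.le_of_dvd two_pos (hq ▸ orderOf_dvd_of_pow_eq_one hsq)
  lia

end PrimitiveRootModPrime

theorem coprime_geomSum_add_one {q r : ℕ} (hq : q ≠ 0) (h : (r + 1).Coprime (q - 1)) :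
    (∑ i ∈ range r, q ^ i + 1).Coprime (q ^ r - 1) := by
  obtain ⟨m, rfl⟩ := Nat.exists_eq_succ_of_ne_zero hq
  have hmod : ∑ i ∈ range r, (m + 1) ^ i + 1 ≡ r + 1 [MOD m] := by
    refine Nat.ModEq.add_right 1 ?_
    simpa using (Nat.ModEq.sum (s := range r) (f := fun i ↦ (m + 1) ^ i) (g := fun _ ↦ 1)
      fun i _ ↦ by simpa using (show m + 1 ≡ 1 [MOD m] by simp).pow i)
  rw [Nat.succ_eq_add_one, ← geom_sum_mul_add, Nat.add_sub_cancel]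
  exact (by simp : Nat.Coprime _ _).mul_right (hmod.gcd_eq.trans h)

theorem pow_geomSum_pow {M : Type*} [Monoid M] {q r : ℕ} {x : M} (hx : x ^ q ^ r = x) :
    (x ^ ∑ i ∈ range r, q ^ i) ^ q = x ^ ∑ i ∈ range r, q ^ i := by
  cases r with
  | zero => simp
  | succ r =>
    rw [← pow_mul, sum_mul]
    simp only [← pow_succ]
    rw [sum_range_succ, pow_add, hx, ← pow_succ, sum_range_succ' (fun i ↦ q ^ i), pow_zero]

theorem injective_mul_pow_add {R : Type*} [CommRing R] [IsDomain R] {S : Set R} {m : ℕ} {a : R}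
    (hm : m ≠ 0) (ha : a ≠ 0) (hS : ∀ x : R, x ^ m ∈ S)
    (hinj : Set.InjOn (fun y ↦ y * (y + a) ^ m) S) :
    Function.Injective fun x ↦ x * (x ^ m + a) := by
  intro x x' hxx'
  have hpow : x ^ m = x' ^ m := hinj (hS x) (hS x') (by
    simpa only [mul_pow] using congrArg (· ^ m) hxx')
  simp only [hpow] at hxx'
  refine mul_right_cancel₀ (fun hzero ↦ ?_) hxx'
  have hx' : x' ^ m = 0 := hinj (hS x') (by simpa [hm] using hS 0) (by simp [hzero, hm])
  exact ha (by simpa [hx'] using hzero)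

/-- Both `f` and `x ↦ f x + x` are bijections: the property, for the function induced by a
polynomial, that makes it a complete permutation polynomial. -/
def IsCompletePermutation {F : Type*} [Add F] (f : F → F) : Prop :=
  Function.Bijective f ∧ Function.Bijective fun x ↦ f x + x

theorem isCompletePermutation_inv_mul_pow {F : Type*} [Field F] [Fintype F] {q r : ℕ}
    (hF : Fintype.card F = q ^ r) (hcop : (r + 1).Coprime (q - 1)) {a : F} (ha : a ≠ 0)
    (hinj : Set.InjOn (fun y ↦ y * (y + a) ^ ∑ i ∈ range r, q ^ i) {y | y ^ q = y}) :
    IsCompletePermutation fun x ↦ a⁻¹ * x ^ (∑ i ∈ range r, q ^ i + 1) := by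
  have hr : r ≠ 0 := by
    rintro rfl
    exact Fintype.one_lt_card.ne' hF
  have hq : q ≠ 0 := by
    rintro rfl
    exact Fintype.card_ne_zero (hF.trans (zero_pow hr))
  have pow_card (x : F) : x ^ q ^ r = x := hF ▸ FiniteField.pow_card x
  have hmul : Function.Injective (a⁻¹ * ·) := mul_right_injective₀ (inv_ne_zero ha)
  constructor <;> rw [← Finite.injective_iff_bijective]
  · have hpow := pow_injOn_pow_eq_self (M := F) (Nat.succ_ne_zero _)
      (coprime_geomSum_add_one hq hcop)
    exact hmul.comp fun x y ↦ hpow (pow_card x) (pow_card y)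
  · have hsum : ∑ i ∈ range r, q ^ i ≠ 0 := by
      rw [Ne, sum_eq_zero_iff]
      exact fun h ↦ pow_ne_zero 0 hq (h 0 (mem_range.mpr (Nat.pos_of_ne_zero hr)))
    have hshift := injective_mul_pow_add hsum ha (fun x ↦ pow_geomSum_pow (pow_card x)) hinj
    convert hmul.comp hshift using 2 with x
    simp only [Function.comp_apply]
    field_simp
    ring

section PrimeOrderRoot

variable {F : Type*} [Field F] {p k ℓ : ℕ} [ExpChar F p] {ζ s t y : F}

theorem mul_add_pow_geomSum_eq_dickson (hℓ : ℓ.Prime)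
    (hq : orderOf ((p ^ k : ℕ) : ZMod ℓ) = ℓ - 1) (hζ : IsPrimitiveRoot ζ ℓ)
    (hs : s ^ p ^ k = s) (ht : t ^ p ^ k = t) (hy : y ^ p ^ k = y) :
    y * (y + (s * (1 - ζ) + t * (1 - ζ⁻¹))) ^ ∑ i ∈ range (ℓ - 1), (p ^ k) ^ i =
      (dickson 1 (s * t) ℓ).eval (y + (s + t)) - (s ^ ℓ + t ^ ℓ) := by
  let f (η : F) : F := y + (s + t) - η * s - η⁻¹ * t
  have iterate_fixed {z : F} (hz : z ^ p ^ k = z) (i : ℕ) : z ^ p ^ (k * i) = z := by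
    rw [pow_mul, ← congrFun (pow_iterate (p ^ k) i) z]
    exact Function.IsFixedPt.iterate hz i
  have hconj (i : ℕ) : f ζ ^ (p ^ k) ^ i = f (ζ ^ (p ^ k) ^ i) := by
    simp only [f, ← pow_mul, sub_pow_expChar_pow, add_pow_expChar_pow, mul_pow, inv_pow,
      iterate_fixed hs, iterate_fixed ht, iterate_fixed hy]
  have hf1 : f 1 = y := by simp only [f, inv_one]; ring
  calc
    _ = f 1 * f ζ ^ ∑ i ∈ range (ℓ - 1), (p ^ k) ^ i := by
      rw [hf1]; congr 2; simp only [f]; ring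
    _ = f 1 * ∏ i ∈ range (ℓ - 1), f (ζ ^ (p ^ k) ^ i) := by
      simp only [← prod_pow_eq_pow_sum, hconj]
    _ = ∏ i ∈ range ℓ, f (ζ ^ i) :=
      (prod_range_pow_eq_mul_prod_range_pow_pow hℓ hq hζ.pow_eq_one f).symm
    _ = _ := prod_range_sub_sub_eq_dickson hℓ.pos hζ _ s t

theorem mul_one_sub_add_mul_one_sub_inv_ne_zero {q : ℕ} (hℓ : 1 < ℓ)
    (hcop : ℓ.Coprime (q - 1)) (hζ : IsPrimitiveRoot ζ ℓ) (hs : s ^ q = s) (ht : t ^ q = t)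
    (hst : s ≠ 0 ∨ t ≠ 0) :
    s * (1 - ζ) + t * (1 - ζ⁻¹) ≠ 0 := by
  have hζ0 : ζ ≠ 0 := hζ.ne_zero (by lia)
  have hζ1 : ζ ≠ 1 := hζ.ne_one hℓ
  have hfactor : s * (1 - ζ) + t * (1 - ζ⁻¹) = ζ⁻¹ * (1 - ζ) * (ζ * s - t) := by
    field_simp
    ring
  rw [hfactor]
  refine mul_ne_zero (mul_ne_zero (inv_ne_zero hζ0) (sub_ne_zero.mpr hζ1.symm)) fun h ↦ ?_
  have hζs : ζ * s = t := sub_eq_zero.mp h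
  have hs0 : s ≠ 0 := by rintro rfl; simp_all
  have hζq : ζ ^ q = ζ := mul_right_cancel₀ hs0 (by rw [hζs, ← ht, ← hζs, mul_pow, hs])
  exact hζ1 (pow_injOn_pow_eq_self (by lia) hcop hζq (one_pow q)
    (hζ.pow_eq_one.trans (one_pow ℓ).symm))

theorem isCompletePermutation_of_isPrimitiveRoot [Fintype F] (hℓ : ℓ.Prime) (hℓ3 : 3 < ℓ)
    (hq : orderOf ((p ^ k : ℕ) : ZMod ℓ) = ℓ - 1) (hF : Fintype.card F = (p ^ k) ^ (ℓ - 1))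
    (hζ : IsPrimitiveRoot ζ ℓ) (hs : s ^ p ^ k = s) (ht : t ^ p ^ k = t) (hst : s ≠ 0 ∨ t ≠ 0) :
    IsCompletePermutation fun x ↦
      (s * (1 - ζ) + t * (1 - ζ⁻¹))⁻¹ * x ^ (∑ i ∈ range (ℓ - 1), (p ^ k) ^ i + 1) := by
  have hcop2 : ℓ.Coprime ((p ^ k) ^ 2 - 1) := coprime_sq_sub_one_of_orderOf hℓ hℓ3 hq
  have hcop : ℓ.Coprime (p ^ k - 1) := hcop2.coprime_dvd_right (Nat.sub_one_dvd_pow_sub_one _ _)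
  refine isCompletePermutation_inv_mul_pow hF (by rwa [Nat.sub_add_cancel hℓ.one_le])
    (mul_one_sub_add_mul_one_sub_inv_ne_zero hℓ.one_lt hcop hζ hs ht hst) ?_
  intro y hy y' hy' hyy'
  simp only [mul_add_pow_geomSum_eq_dickson hℓ hq hζ hs ht hy,
    mul_add_pow_geomSum_eq_dickson hℓ hq hζ hs ht hy', sub_left_inj] at hyy'
  have hfix {z : F} (hz : z ^ p ^ k = z) : (z + (s + t)) ^ p ^ k = z + (s + t) := by
    simp only [add_pow_expChar_pow, hz, hs, ht]
  have hb : (s * t) ^ p ^ k = s * t := by rw [mul_pow, hs, ht]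
  exact add_right_cancel
    (dickson_one_eval_injOn p k hℓ.ne_zero hcop2 hb (hfix hy) (hfix hy') hyy')

end PrimeOrderRoot

theorem orderOf_three_pow_zmod_seven {k : ℕ} (hk : k.gcd 6 = 1) :
    orderOf ((3 ^ k : ℕ) : ZMod 7) = 6 := by
  have h3 : orderOf (3 : ZMod 7) = 6 := (orderOf_eq_iff (by norm_num)).mpr (by decide)
  rw [Nat.cast_pow, Nat.cast_ofNat, Nat.Coprime.orderOf_pow (by rwa [h3, Nat.coprime_comm]), h3]

/-- A primitive seventh root of unity when `β ^ 6 + β + 2 = 0` in characteristic `3`; the formula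
solves `1 - ζ = [0, 0, 1, 1, 1, 1]`, the first listed coefficient for `u = 1`. -/
def seventhRoot {F : Type*} [CommRing F] (β : F) : F := 1 - (β ^ 2 + β ^ 3 + β ^ 4 + β ^ 5)

section SeventhRoot

variable {F : Type*} [Field F] [CharP F 3] {β : F}

theorem seventhRoot_pow (hβ : β ^ 6 + β + 2 = 0) :
    seventhRoot β ^ 2 = 1 + β + β ^ 4 - β ^ 5 ∧
    seventhRoot β ^ 3 = -1 - β ^ 2 + β ^ 3 - β ^ 5 ∧
    seventhRoot β ^ 4 = -1 + β - β ^ 2 - β ^ 4 - β ^ 5 ∧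
    seventhRoot β ^ 5 = -β ^ 2 - β ^ 4 - β ^ 5 ∧
    seventhRoot β ^ 6 = -1 + β + β ^ 2 - β ^ 4 - β ^ 5 := by
  unfold seventhRoot
  refine ⟨?_, ?_, ?_, ?_, ?_⟩ <;> grind

theorem isPrimitiveRoot_seventhRoot (hβ : β ^ 6 + β + 2 = 0) :
    IsPrimitiveRoot (seventhRoot β) 7 := by
  have : NeZero ((7 : ℕ) : F) := ⟨by push_cast; rw [show (7 : F) = 1 by grind]; exact one_ne_zero⟩
  have : Fact (Nat.Prime 7) := ⟨by norm_num⟩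
  obtain ⟨h2, h3, h4, h5, h6⟩ := seventhRoot_pow hβ
  rw [← isRoot_cyclotomic_iff, IsRoot, cyclotomic_prime, eval_geom_sum]
  simp only [sum_range_succ, sum_range_zero, h2, h3, h4, h5, h6]
  unfold seventhRoot
  grind

theorem exists_eq_mul_one_sub_add_mul_one_sub_inv (hβ : β ^ 6 + β + 2 = 0) {u a : F}
    (ha : a ∈ [vec6 β 0 0 u u u u,
        vec6 β 0 u 0 0 u (-u),
        vec6 β 0 u 0 (-u) (-u) 0,
        vec6 β u 0 u 0 u u,
        vec6 β u 0 (-u) u 0 (-u),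
        vec6 β u u 0 (-u) u u,
        vec6 β u u u 0 (-u) 0,
        vec6 β u u u 0 (-u) (-u),
        vec6 β u u (-u) 0 (-u) (-u),
        vec6 β u u (-u) u 0 0,
        vec6 β u (-u) u 0 0 (-u),
        vec6 β u (-u) (-u) (-u) u (-u)]) :
    ∃ ζ : F, IsPrimitiveRoot ζ 7 ∧ ∃ s ∈ ({u, -u} : Set F), ∃ t ∈ ({0, u, -u} : Set F),
      a = s * (1 - ζ) + t * (1 - ζ⁻¹) := by
  suffices hpow : ∃ j ∈ Ioo 0 7, ∃ s ∈ ({u, -u} : Set F), ∃ t ∈ ({0, u, -u} : Set F),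
      a = s * (1 - seventhRoot β ^ j) + t * (1 - seventhRoot β ^ (7 - j)) by
    obtain ⟨j, hj, s, hs, t, ht, rfl⟩ := hpow
    obtain ⟨hj0, hj7⟩ := mem_Ioo.mp hj
    have hζ := isPrimitiveRoot_seventhRoot hβ
    refine ⟨seventhRoot β ^ j, hζ.pow_of_coprime j
      (Nat.coprime_of_lt_prime hj0.ne' hj7 (by norm_num)).symm, s, hs, t, ht, ?_⟩
    rw [pow_sub₀ _ (hζ.ne_zero (by norm_num)) hj7.le, hζ.pow_eq_one, one_mul]
  obtain ⟨h2, h3, h4, h5, h6⟩ := seventhRoot_pow hβ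
  have h1 : seventhRoot β ^ 1 = 1 - (β ^ 2 + β ^ 3 + β ^ 4 + β ^ 5) := pow_one _
  simp only [List.mem_cons, List.not_mem_nil, or_false] at ha
  rcases ha with rfl | rfl | rfl | rfl | rfl | rfl | rfl | rfl | rfl | rfl | rfl | rfl
  · exact ⟨1, by simp, u, by simp, 0, by simp, by simp only [vec6, h1, h6]; grind⟩
  · exact ⟨2, by simp, -u, by simp, 0, by simp, by simp only [vec6, h2, h5]; grind⟩
  · exact ⟨3, by simp, u, by simp, -u, by simp, by simp only [vec6, h3, h4]; grind⟩
  · exact ⟨5, by simp, u, by simp, 0, by simp, by simp only [vec6, h5, h2]; grind⟩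
  · exact ⟨3, by simp, -u, by simp, 0, by simp, by simp only [vec6, h3, h4]; grind⟩
  · exact ⟨1, by simp, -u, by simp, -u, by simp, by simp only [vec6, h1, h6]; grind⟩
  · exact ⟨5, by simp, u, by simp, -u, by simp, by simp only [vec6, h5, h2]; grind⟩
  · exact ⟨6, by simp, -u, by simp, 0, by simp, by simp only [vec6, h6, h1]; grind⟩
  · exact ⟨4, by simp, -u, by simp, 0, by simp, by simp only [vec6, h4, h3]; grind⟩
  · exact ⟨1, by simp, u, by simp, -u, by simp, by simp only [vec6, h1, h6]; grind⟩
  · exact ⟨2, by simp, u, by simp, u, by simp, by simp only [vec6, h2, h5]; grind⟩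
  · exact ⟨3, by simp, u, by simp, u, by simp, by simp only [vec6, h3, h4]; grind⟩

end SeventhRoot

/-- **Corollary (p = 3, r = 6).** Let `k ≥ 1` with `gcd(k, 6) = 1`, `n = 6k`,
`d = (3^{6k} - 1)/(3^k - 1) + 1`, and let `F` be the finite field with `3^n` elements.
Let `β ∈ F` satisfy `β⁶ + β + 2 = 0`, and let `u ∈ F_{3^k}` (fixed by `x ↦ x^{3^k}`),
`u ≠ 0`. Then `a⁻¹ x^d` is a complete permutation polynomial over `F` for each of the
twelve listed values of `a`. -/
theorem stmt_9 (k : ℕ) (hk : 0 < k) (hk6 : Nat.gcd k 6 = 1)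
    (n : ℕ) (hn : n = 6 * k) (d : ℕ) (hd : d = (3 ^ (6 * k) - 1) / (3 ^ k - 1) + 1)
    (F : Type*) [Field F] [Fintype F] (hF : Fintype.card F = 3 ^ n)
    (β : F) (hβ : β ^ 6 + β + 2 = 0)
    (u : F) (hu : u ^ (3 ^ k) = u) (hu0 : u ≠ 0) :
    ∀ a : F,
      a ∈ ([vec6 β 0 0 u u u u,
            vec6 β 0 u 0 0 u (-u),
            vec6 β 0 u 0 (-u) (-u) 0,
            vec6 β u 0 u 0 u u,
            vec6 β u 0 (-u) u 0 (-u),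
            vec6 β u u 0 (-u) u u,
            vec6 β u u u 0 (-u) 0,
            vec6 β u u u 0 (-u) (-u),
            vec6 β u u (-u) 0 (-u) (-u),
            vec6 β u u (-u) u 0 0,
            vec6 β u (-u) u 0 0 (-u),
            vec6 β u (-u) (-u) (-u) u (-u)] : List F) →
      Function.Bijective (fun x : F => a⁻¹ * x ^ d) ∧
      Function.Bijective (fun x : F => a⁻¹ * x ^ d + x) := by
  intro a ha
  have : Fact (Nat.Prime 3) := ⟨Nat.prime_three⟩
  have : CharP F 3 := charP_of_card_eq_prime_pow hF
  have : ExpChar F 3 := .prime Nat.prime_three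
  obtain ⟨ζ, hζ, s, hs, t, ht, rfl⟩ := exists_eq_mul_one_sub_add_mul_one_sub_inv hβ ha
  have hneg : (-u) ^ 3 ^ k = -u := by
    rw [Odd.neg_pow (Odd.pow (by decide)), hu]
  have hs_fixed : s ^ 3 ^ k = s := by rcases hs with rfl | rfl <;> assumption
  have ht_fixed : t ^ 3 ^ k = t := by
    rcases ht with rfl | rfl | rfl
    exacts [zero_pow (by positivity), hu, hneg]
  have hs0 : s ≠ 0 := by rcases hs with rfl | rfl <;> simpa
  have hd_sum : d = ∑ i ∈ range (7 - 1), (3 ^ k) ^ i + 1 := by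
    rw [hd, Nat.geomSum_eq (Nat.one_lt_pow hk.ne' (by norm_num)), mul_comm, pow_mul]
  have hcard : Fintype.card F = (3 ^ k) ^ (7 - 1) := by rw [hF, hn, mul_comm, pow_mul]
  rw [hd_sum]
  exact isCompletePermutation_of_isPrimitiveRoot (p := 3) (k := k) (ℓ := 7) (by norm_num)
    (by norm_num) (orderOf_three_pow_zmod_seven hk6) hcard hζ hs_fixed ht_fixed (.inl hs0)
end

section
/- Let p be an odd prime, r = p - 1, and let t be a positive integer with gcd(rt + 1, p - 1) = 1. Set d = t·(p^r - 1)/(p - 1) + 1. Then for every a ∈ F_{p^r} with a^{p-1} = -1, the polynomial a^{-1}x^d is a complete permutation polynomial over F_{p^r}; that is, both x ↦ a^{-1}x^d and x ↦ a^{-1}x^d + x are bijections of F_{p^r}. -/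
/-!
Let `F` have `q ^ r` elements and let `N = 1 + q + ⋯ + q ^ (r - 1)`, so that `u = x ^ N` is the norm
of `x` to `𝔽_q` and `a⁻¹ x ^ d + x = x (1 + b)` with `b = a⁻¹ u ^ t`. As `u ∈ 𝔽_q` and `a ^ q = -a`,
also `b ^ q = -b`: thus `1 + b` lies in `𝔽_{q²}`, with conjugate `1 - b`. Because `q - 1 ∣ r`,
the exponent `2 N` is a multiple of `q² - 1`, so `(1 + b) ^ N` is a sign, and conjugate elements
have the same sign. Taking `N`-th powers of `x (1 + b) = y (1 + c)` gives `u² = v²`, hence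
`b = ±c`; so the two signs agree, `u = v`, `b = c`, and finally `x = y`.
-/

open Function Finset

/-- The exponent `1 + q + ⋯ + q ^ (r - 1)` of the norm map `x ↦ x ^ normExponent q r` from the field
with `q ^ r` elements to the field with `q` elements. Defining it as a sum rather than as the
quotient `(q ^ r - 1) / (q - 1)` avoids truncated operations. -/
def normExponent (q r : ℕ) : ℕ := ∑ i ∈ range r, q ^ i

section Arithmetic

variable {q r : ℕ}

lemma normExponent_mul_sub_one (hq : 1 ≤ q) (r : ℕ) :
    normExponent q r * (q - 1) = q ^ r - 1 :=
  geom_sum_mul_of_one_le hq r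

lemma normExponent_modEq {m : ℕ} (h : q ≡ 1 [MOD m]) (r : ℕ) : normExponent q r ≡ r [MOD m] := by
  simpa [normExponent] using Nat.ModEq.sum fun i (_ : i ∈ range r) ↦ h.pow i

lemma normExponent_two_mul (q s : ℕ) :
    normExponent q (2 * s) = (q + 1) * normExponent (q ^ 2) s := by
  induction s with
  | zero => simp [normExponent]
  | succ s ih =>
    simp only [normExponent, mul_add_one, sum_range_succ, ← pow_mul] at ih ⊢
    rw [ih]
    ring

lemma coprime_mul_normExponent_add_one (hq : 1 ≤ q) {t : ℕ} (h : (r * t + 1).Coprime (q - 1)) :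
    (t * normExponent q r + 1).Coprime (q ^ r - 1) := by
  have hmod : t * normExponent q r + 1 ≡ r * t + 1 [MOD q - 1] := by
    rw [mul_comm r t]
    exact ((normExponent_modEq (Nat.modEq_sub hq) r).mul_left t).add_right 1
  rw [← normExponent_mul_sub_one hq r]
  refine Nat.Coprime.mul_right (by simp) ?_
  rwa [Nat.Coprime, hmod.gcd_eq]

lemma sq_sub_one_dvd_two_mul_normExponent (hq : Odd q) (hr : q - 1 ∣ r) :
    q ^ 2 - 1 ∣ 2 * normExponent q r := by
  obtain ⟨s, rfl⟩ : 2 ∣ r := hq.tsub_odd odd_one |>.two_dvd.trans hr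
  have hdvd : q - 1 ∣ 2 * normExponent (q ^ 2) s := by
    have hsq : q ^ 2 ≡ 1 [MOD q - 1] := by simpa using (Nat.modEq_sub hq.pos).pow 2
    exact ((normExponent_modEq hsq s).mul_left 2).dvd_iff dvd_rfl |>.2 hr
  have hsq : q ^ 2 - 1 = (q + 1) * (q - 1) := by simpa using Nat.sq_sub_sq q 1
  rw [normExponent_two_mul, hsq, mul_left_comm]
  exact mul_dvd_mul_left _ hdvd

end Arithmetic

lemma pow_bijective_of_coprime_card_units {G₀ : Type*} [GroupWithZero G₀] {n : ℕ} (hn₀ : n ≠ 0)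
    (hn : (Nat.card G₀ˣ).Coprime n) : Bijective fun x : G₀ ↦ x ^ n := by
  have hunits := hn.pow_left_bijective
  constructor
  · intro x y (hxy : x ^ n = y ^ n)
    rcases eq_or_ne y 0 with rfl | hy
    · simpa [hn₀] using hxy
    have hx : x ≠ 0 := by
      rintro rfl
      exact pow_ne_zero n hy (by rw [← hxy, zero_pow hn₀])
    have : Units.mk0 x hx = Units.mk0 y hy := hunits.injective (Units.ext hxy)
    exact congrArg Units.val this
  · intro y
    rcases eq_or_ne y 0 with rfl | hy
    · exact ⟨0, zero_pow hn₀⟩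
    obtain ⟨x, hx⟩ := hunits.surjective (Units.mk0 y hy)
    exact ⟨x, congrArg Units.val hx⟩

-- The `N`-th power of `x * g (x ^ N)` is `u * g u ^ N`, where `u = x ^ N`.
lemma injective_mul_comp_pow {M : Type*} [CommMonoidWithZero M] [IsRightCancelMulZero M] {N : ℕ}
    {g : M → M} (hg : ∀ x, g (x ^ N) ≠ 0)
    (hinj : Set.InjOn (fun u ↦ u * g u ^ N) (Set.range (· ^ N))) :
    Injective fun x ↦ x * g (x ^ N) := by
  intro x y (hxy : x * g (x ^ N) = y * g (y ^ N))
  have hpow : x ^ N = y ^ N :=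
    hinj ⟨x, rfl⟩ ⟨y, rfl⟩ (by simpa only [mul_pow] using congrArg (· ^ N) hxy)
  rw [hpow] at hxy
  exact mul_right_cancel₀ (hg y) hxy

lemma one_add_ne_zero_of_pow_eq_neg {R : Type*} [Ring R] (h2 : (2 : R) ≠ 0) {q : ℕ}
    (hq : Odd q) {b : R} (hb : b ^ q = -b) : 1 + b ≠ 0 := by
  intro h
  obtain rfl : b = -1 := (neg_eq_of_add_eq_zero_right h).symm
  rw [hq.neg_one_pow, neg_neg] at hb
  rw [hb, one_add_one_eq_two] at h
  exact h2 h

lemma inv_mul_pow_pow_eq_neg {K : Type*} [Field K] {q : ℕ} (hq : q ≠ 0) {a u : K}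
    (ha : a ^ (q - 1) = -1) (hu : u ^ q = u) (t : ℕ) :
    (a⁻¹ * u ^ t) ^ q = -(a⁻¹ * u ^ t) := by
  have haq : a ^ q = -a := by rw [← pow_sub_one_mul hq, ha, neg_one_mul]
  rw [mul_pow, inv_pow, haq, pow_right_comm, hu, inv_neg, neg_mul]

section FiniteField

variable {F : Type*} [Field F] [Fintype F] {q r : ℕ}

lemma exponent_ne_zero_of_card_eq_pow (hF : Fintype.card F = q ^ r) : r ≠ 0 := by
  rintro rfl
  exact Fintype.one_lt_card.ne' hF

lemma two_ne_zero_of_card_eq_odd_pow (hF : Fintype.card F = q ^ r) (hq : Odd q) :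
    (2 : F) ≠ 0 := by
  refine Ring.two_ne_zero fun hchar ↦ ?_
  have := FiniteField.even_card_of_char_two hchar
  exact Nat.not_even_iff_odd.2 hq.pow (hF ▸ Nat.even_iff.2 this)

lemma add_pow_of_card_eq_pow (hF : Fintype.card F = q ^ r) (x y : F) :
    (x + y) ^ q = x ^ q + y ^ q := by
  obtain ⟨p, hchar, n, hp, hcard⟩ := FiniteField.card' F
  have : Fact p.Prime := ⟨hp⟩
  have hdvd : q ∣ p ^ (n : ℕ) := by
    rw [← hcard, hF]
    exact dvd_pow_self q (exponent_ne_zero_of_card_eq_pow hF)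
  obtain ⟨m, -, rfl⟩ := (Nat.dvd_prime_pow hp).1 hdvd
  exact add_pow_char_pow x y p m

lemma pow_normExponent_pow (hF : Fintype.card F = q ^ r) (x : F) :
    (x ^ normExponent q r) ^ q = x ^ normExponent q r := by
  obtain ⟨s, rfl⟩ := Nat.exists_eq_succ_of_ne_zero (exponent_ne_zero_of_card_eq_pow hF)
  have hlast : normExponent q (s + 1) = normExponent q s + q ^ s := sum_range_succ _ _
  have hfirst : normExponent q (s + 1) = q * normExponent q s + 1 := geom_sum_succ
  calc (x ^ normExponent q (s + 1)) ^ q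
      = x ^ (q * normExponent q s) * x ^ q ^ (s + 1) := by
        rw [hlast]
        ring
    _ = x ^ normExponent q (s + 1) := by
        rw [← hF, FiniteField.pow_card, ← pow_succ, hfirst]

variable {b : F}

lemma one_add_pow_of_pow_eq_neg (hF : Fintype.card F = q ^ r) (hb : b ^ q = -b) :
    (1 + b) ^ q = 1 - b := by
  rw [add_pow_of_card_eq_pow hF, one_pow, hb, sub_eq_add_neg]

lemma one_add_pow_sq_sub_one (hF : Fintype.card F = q ^ r) (hq : Odd q) (hb : b ^ q = -b) :
    (1 + b) ^ (q ^ 2 - 1) = 1 := by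
  have hb' : (-b) ^ q = -(-b) := by rw [hq.neg_pow, hb]
  have hfix : (1 + b) ^ q ^ 2 = 1 + b := by
    rw [sq, pow_mul, one_add_pow_of_pow_eq_neg hF hb, sub_eq_add_neg,
      one_add_pow_of_pow_eq_neg hF hb', sub_neg_eq_add]
  have hne : 1 + b ≠ 0 :=
    one_add_ne_zero_of_pow_eq_neg (two_ne_zero_of_card_eq_odd_pow hF hq) hq hb
  refine mul_right_cancel₀ hne ?_
  rw [pow_sub_one_mul (pow_ne_zero 2 hq.pos.ne'), hfix, one_mul]

lemma one_add_pow_normExponent_sq (hF : Fintype.card F = q ^ r) (hq : Odd q) (hr : q - 1 ∣ r)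
    (hb : b ^ q = -b) : ((1 + b) ^ normExponent q r) ^ 2 = 1 := by
  obtain ⟨k, hk⟩ := sq_sub_one_dvd_two_mul_normExponent hq hr
  rw [← pow_mul, mul_comm, hk, pow_mul, one_add_pow_sq_sub_one hF hq hb, one_pow]

lemma one_sub_pow_normExponent (hF : Fintype.card F = q ^ r) (hq : Odd q) (hr : q - 1 ∣ r)
    (hb : b ^ q = -b) : (1 - b) ^ normExponent q r = (1 + b) ^ normExponent q r := by
  obtain ⟨k, hk⟩ := hq
  rw [← one_add_pow_of_pow_eq_neg hF hb, pow_right_comm]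
  generalize hε : (1 + b) ^ normExponent q r = ε
  have hsq : ε ^ 2 = 1 := hε ▸ one_add_pow_normExponent_sq hF ⟨k, hk⟩ hr hb
  rw [hk, pow_succ, pow_mul, hsq, one_pow, one_mul]

variable {a : F}

lemma injOn_mul_one_add_pow_normExponent (hF : Fintype.card F = q ^ r) (hq : Odd q)
    (hr : q - 1 ∣ r) (ha : a ^ (q - 1) = -1) (t : ℕ) :
    Set.InjOn (fun u ↦ u * (1 + a⁻¹ * u ^ t) ^ normExponent q r) {u : F | u ^ q = u} := by
  intro u hu v hv huv
  have hbu := inv_mul_pow_pow_eq_neg hq.pos.ne' ha hu t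
  have hbv := inv_mul_pow_pow_eq_neg hq.pos.ne' ha hv t
  have hwu := one_add_pow_normExponent_sq hF hq hr hbu
  have hwv := one_add_pow_normExponent_sq hF hq hr hbv
  have hw : 1 + a⁻¹ * v ^ t ≠ 0 :=
    one_add_ne_zero_of_pow_eq_neg (two_ne_zero_of_card_eq_odd_pow hF hq) hq hbv
  have hsq : u ^ 2 = v ^ 2 :=
    calc u ^ 2 = (u * (1 + a⁻¹ * u ^ t) ^ normExponent q r) ^ 2 := by rw [mul_pow, hwu, mul_one]
      _ = (v * (1 + a⁻¹ * v ^ t) ^ normExponent q r) ^ 2 := congrArg (· ^ 2) huv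
      _ = v ^ 2 := by rw [mul_pow, hwv, mul_one]
  refine mul_right_cancel₀ (pow_ne_zero (normExponent q r) hw) ?_
  suffices hsign : (1 + a⁻¹ * u ^ t) ^ normExponent q r = (1 + a⁻¹ * v ^ t) ^ normExponent q r by
    simpa only [hsign] using huv
  rcases sq_eq_sq_iff_eq_or_eq_neg.1 hsq with rfl | rfl
  · rfl
  rcases t.even_or_odd with ht | ht
  · rw [ht.neg_pow]
  · rw [ht.neg_pow, mul_neg, ← sub_eq_add_neg, one_sub_pow_normExponent hF hq hr hbv]

lemma bijective_mul_pow_mul_normExponent_add_one (hF : Fintype.card F = q ^ r) (hq : 1 ≤ q)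
    {t : ℕ} (hcop : (r * t + 1).Coprime (q - 1)) {c : F} (hc : c ≠ 0) :
    Bijective fun x : F ↦ c * x ^ (t * normExponent q r + 1) := by
  have hcard : (Nat.card Fˣ).Coprime (t * normExponent q r + 1) := by
    rw [Nat.card_units, Nat.card_eq_fintype_card, hF]
    exact (coprime_mul_normExponent_add_one hq hcop).symm
  exact (mulLeft_bijective₀ c hc).comp (pow_bijective_of_coprime_card_units (by simp) hcard)

lemma bijective_inv_mul_pow_add_self (hF : Fintype.card F = q ^ r) (hq : Odd q) (hr : q - 1 ∣ r)
    (ha : a ^ (q - 1) = -1) (t : ℕ) :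
    Bijective fun x : F ↦ a⁻¹ * x ^ (t * normExponent q r + 1) + x := by
  refine Finite.injective_iff_bijective.1 ?_
  have hfactor : (fun x : F ↦ a⁻¹ * x ^ (t * normExponent q r + 1) + x) =
      fun x ↦ x * (1 + a⁻¹ * (x ^ normExponent q r) ^ t) := by
    funext x
    ring
  rw [hfactor]
  refine injective_mul_comp_pow (g := fun u ↦ 1 + a⁻¹ * u ^ t) (fun x ↦ ?_) ?_
  · exact one_add_ne_zero_of_pow_eq_neg (two_ne_zero_of_card_eq_odd_pow hF hq) hq
      (inv_mul_pow_pow_eq_neg hq.pos.ne' ha (pow_normExponent_pow hF x) t)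
  · refine (injOn_mul_one_add_pow_normExponent hF hq hr ha t).mono ?_
    rintro _ ⟨x, rfl⟩
    exact pow_normExponent_pow hF x

end FiniteField

theorem stmt_12_general {F : Type*} [Field F] [Fintype F] {q r : ℕ}
    (hF : Fintype.card F = q ^ r) (hq : Odd q) (hr : q - 1 ∣ r) (t : ℕ) {a : F}
    (ha : a ^ (q - 1) = -1) :
    Bijective (fun x : F ↦ a⁻¹ * x ^ (t * ((q ^ r - 1) / (q - 1)) + 1)) ∧
      Bijective (fun x : F ↦ a⁻¹ * x ^ (t * ((q ^ r - 1) / (q - 1)) + 1) + x) := by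
  have hq1 : q ≠ 1 := by
    rintro rfl
    exact Fintype.one_lt_card.ne' (hF.trans (one_pow r))
  have hq2 : 2 ≤ q := by have := hq.pos; omega
  have ha0 : a ≠ 0 := by
    rintro rfl
    rw [zero_pow (by omega)] at ha
    exact neg_ne_zero.2 one_ne_zero ha.symm
  have hcop : (r * t + 1).Coprime (q - 1) := by
    obtain ⟨k, rfl⟩ := hr
    simp [mul_assoc]
  rw [← Nat.geomSum_eq hq2 r]
  exact ⟨bijective_mul_pow_mul_normExponent_add_one hF hq.pos hcop (inv_ne_zero ha0),
    bijective_inv_mul_pow_add_self hF hq hr ha t⟩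

/-- **Theorem.** Let `p` be an odd prime, `r = p - 1`, and `t ≥ 1` with
`gcd(rt + 1, p - 1) = 1`. Set `d = t·(p^r - 1)/(p - 1) + 1` and let `F` be the finite
field with `p^r` elements. Then for every `a ∈ F` with `a^{p-1} = -1`, the monomial
`a⁻¹ x^d` is a complete permutation polynomial over `F`. -/
theorem stmt_12 (p : ℕ) (hp : p.Prime) (hodd : Odd p)
    (r : ℕ) (hr : r = p - 1) (t : ℕ) (ht : 0 < t)
    (hgcd : Nat.gcd (r * t + 1) (p - 1) = 1)
    (d : ℕ) (hd : d = t * ((p ^ r - 1) / (p - 1)) + 1)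
    (F : Type*) [Field F] [Fintype F] (hF : Fintype.card F = p ^ r)
    (a : F) (ha : a ^ (p - 1) = -1) :
    Function.Bijective (fun x : F => a⁻¹ * x ^ d) ∧
    Function.Bijective (fun x : F => a⁻¹ * x ^ d + x) := by
  subst hr hd
  exact stmt_12_general hF hodd dvd_rfl t ha
end

section
/- Let p be an odd prime, t a positive integer, and let c ∈ F_p be an element that is not a 2t-th power in F_p (i.e., c ≠ x^{2t} for every x ∈ F_p; in particular c ≠ 0). Then the map x ↦ x·(x^{2t} - c)^{(p-1)/2} is a bijection of F_p. -/
/-!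
Write the map as `f x = x * s (x ^ d)`, where every value `s (x ^ d)` is a `d`-th root of unity;
here `d = 2` and `s y = (y ^ t - c) ^ ((p - 1) / 2)` is a sign. Then `f x ^ d = x ^ d`, so `f x`
determines the factor `s (x ^ d)` by which `x` was multiplied, and dividing by it inverts `f`.
-/

section CommMonoid

variable {M : Type*} [CommMonoid M] {d : ℕ}

theorem mul_pow_eq_of_pow_eq_one {u : M} (hu : u ^ d = 1) (x : M) : (x * u) ^ d = x ^ d := by
  rw [mul_pow, hu, mul_one]

theorem bijective_mul_comp_pow {s : M → M} (hd : d ≠ 0) (hs : ∀ x, s (x ^ d) ^ d = 1) :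
    Function.Bijective fun x => x * s (x ^ d) := by
  have hs_inv (x : M) : (s (x ^ d) ^ (d - 1)) ^ d = 1 := by rw [pow_right_comm, hs, one_pow]
  refine Function.bijective_iff_has_inverse.mpr
    ⟨fun y => y * s (y ^ d) ^ (d - 1), fun x => ?_, fun y => ?_⟩
  · calc
      x * s (x ^ d) * s ((x * s (x ^ d)) ^ d) ^ (d - 1)
      _ = x * (s (x ^ d) * s (x ^ d) ^ (d - 1)) := by
        rw [mul_pow_eq_of_pow_eq_one (hs x), mul_assoc]
      _ = x := by rw [mul_pow_sub_one hd, hs, mul_one]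
  · calc
      y * s (y ^ d) ^ (d - 1) * s ((y * s (y ^ d) ^ (d - 1)) ^ d)
      _ = y * (s (y ^ d) ^ (d - 1) * s (y ^ d)) := by
        rw [mul_pow_eq_of_pow_eq_one (hs_inv y), mul_assoc]
      _ = y := by rw [pow_sub_one_mul hd, hs, mul_one]

end CommMonoid

theorem bijective_mul_comp_pow_pow_card_sub_one_div {G₀ : Type*} [CommGroupWithZero G₀]
    [Fintype G₀] {d : ℕ} (hd : d ∣ Fintype.card G₀ - 1) {h : G₀ → G₀} (hh : ∀ x, h (x ^ d) ≠ 0) :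
    Function.Bijective fun x => x * h (x ^ d) ^ ((Fintype.card G₀ - 1) / d) := by
  have hd₀ : d ≠ 0 := ne_zero_of_dvd_ne_zero (Nat.sub_ne_zero_of_lt Fintype.one_lt_card) hd
  refine bijective_mul_comp_pow (s := fun y => h y ^ ((Fintype.card G₀ - 1) / d)) hd₀ fun x => ?_
  rw [← pow_mul, Nat.div_mul_cancel hd, FiniteField.pow_card_sub_one_eq_one _ (hh x)]

theorem stmt_13_general {F : Type*} [Field F] [Fintype F] {d : ℕ} (hd : d ∣ Fintype.card F - 1)
    (t : ℕ) {c : F} (hc : ∀ x : F, x ^ (d * t) ≠ c) :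
    Function.Bijective fun x : F => x * (x ^ (d * t) - c) ^ ((Fintype.card F - 1) / d) := by
  simp only [pow_mul] at hc ⊢
  exact bijective_mul_comp_pow_pow_card_sub_one_div hd (h := fun y => y ^ t - c)
    fun x => sub_ne_zero.mpr (hc x)

/-- **Key lemma.** Let `p` be an odd prime, `t ≥ 1`, and let `c ∈ F_p` be an element
that is not a `2t`-th power in `F_p` (i.e. `c ≠ x^{2t}` for every `x ∈ F_p`). Then the
map `x ↦ x·(x^{2t} - c)^{(p-1)/2}` is a bijection of `F_p`. -/
theorem stmt_13 (p : ℕ) (hp : p.Prime) (hodd : Odd p) (t : ℕ) (ht : 0 < t)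
    (c : ZMod p) (hc : ∀ x : ZMod p, x ^ (2 * t) ≠ c) :
    Function.Bijective (fun x : ZMod p => x * (x ^ (2 * t) - c) ^ ((p - 1) / 2)) := by
  have : Fact p.Prime := ⟨hp⟩
  have two_dvd : 2 ∣ Fintype.card (ZMod p) - 1 := by
    simpa only [ZMod.card] using (hodd.tsub_odd odd_one).two_dvd
  simpa only [ZMod.card] using stmt_13_general two_dvd t hc
end

section
/- Let p be an odd prime, k and i positive integers, and let a ∈ F_{p^{2k}} satisfy a^{p^k - 1} = -1. Then a² lies in the subfield F_{p^k} of F_{p^{2k}}, and the map x ↦ x^{p^i} - a²·x is a bijection of F_{p^k}. -/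
/-!
Let `K` be the subfield of `F` fixed by `x ↦ x ^ p ^ k`. Since `a ^ p ^ k = -a ≠ a`, the element `a`
is not in `K`, whereas `a ^ 2` is; the only square roots of `a ^ 2` are `a` and `-a`, so `a ^ 2` is
not a square in `K`. A nonzero `z` in `K` killed by the additive map `x ↦ x ^ p ^ i - a ^ 2 * x`
would satisfy `a ^ 2 = z ^ (p ^ i - 1)`, a square in `K` because `p ^ i - 1` is even. So the map is
injective on the finite field `K`, hence bijective.
-/

section NoZeroDivisors

variable {R : Type*} [CommRing R] [NoZeroDivisors R]

theorem not_isSquare_sq_of_notMem {S : Type*} [SetLike S R] [MulMemClass S R] [NegMemClass S R]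
    {K : S} {a : R} (ha : a ∉ K) (ha2 : a ^ 2 ∈ K) : ¬IsSquare (⟨a ^ 2, ha2⟩ : K) := by
  rintro ⟨⟨y, hy⟩, hay⟩
  have hsq : a ^ 2 = y ^ 2 := (congrArg Subtype.val hay).trans (sq y).symm
  rcases sq_eq_sq_iff_eq_or_eq_neg.1 hsq with rfl | rfl
  · exact ha hy
  · exact ha (neg_mem hy)

variable {p : ℕ} [ExpChar R p]

theorem injective_pow_sub_mul_of_not_isSquare (hp : Odd p) (i : ℕ) {c : R} (hc : ¬IsSquare c) :
    Function.Injective fun x : R => x ^ p ^ i - c * x := by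
  let L : R →+ R := (iterateFrobenius R p i).toAddMonoidHom - AddMonoidHom.mulLeft c
  suffices Function.Injective L from this
  refine (injective_iff_map_eq_zero L).2 fun z hz => ?_
  by_contra hz0
  have hpow : z ^ p ^ i = c * z := sub_eq_zero.1 hz
  obtain ⟨m, hm⟩ := hp.pow (n := i)
  have hsq : c = z ^ m * z ^ m := mul_right_cancel₀ hz0 <| by
    rw [← hpow, hm]
    ring
  exact hc ⟨z ^ m, hsq⟩

theorem bijOn_pow_sub_mul_of_not_isSquare {S : Type*} [SetLike S R] [SubringClass S R]
    (hp : Odd p) (i : ℕ) (K : S) [Finite K] {c : K} (hc : ¬IsSquare c) :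
    Set.BijOn (fun x : R => x ^ p ^ i - c * x) K K := by
  have : ExpChar K p := (SubringClass.subtype K).expChar Subtype.val_injective p
  have hbij : Function.Bijective fun x : K => x ^ p ^ i - c * x :=
    Finite.injective_iff_bijective.1 (injective_pow_sub_mul_of_not_isSquare hp i hc)
  refine ⟨fun x hx => ?_, fun x hx y hy hxy => ?_, fun y hy => ?_⟩
  · exact sub_mem (pow_mem hx _) (mul_mem c.2 hx)
  · exact congrArg Subtype.val (@hbij.1 ⟨x, hx⟩ ⟨y, hy⟩ (Subtype.ext hxy))
  · obtain ⟨x, hx⟩ := hbij.2 ⟨y, hy⟩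
    exact ⟨x, x.2, congrArg Subtype.val hx⟩

end NoZeroDivisors

section FrobeniusFixedField

variable {F : Type*} [Field F] {p : ℕ} [ExpChar F p]

variable (F p) in
/-- The subfield of `F` fixed by the `k`-th iterate of Frobenius. For `p` prime and `k ≠ 0` it is
the copy of `F_{p^k}` in `F` whenever `F` contains one. -/
def frobeniusFixedField (k : ℕ) : Subfield F :=
  (iterateFrobenius F p k).eqLocusField (RingHom.id F)

theorem mem_frobeniusFixedField {k : ℕ} {x : F} :
    x ∈ frobeniusFixedField F p k ↔ x ^ p ^ k = x :=
  Iff.rfl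

theorem finite_frobeniusFixedField {k : ℕ} (hq : 1 < p ^ k) :
    Finite (frobeniusFixedField F p k) := by
  have hne : (Polynomial.X ^ p ^ k - Polynomial.X : Polynomial F) ≠ 0 :=
    FiniteField.X_pow_card_sub_X_ne_zero F hq
  refine ((Polynomial.finite_setOfPred_isRoot hne).subset fun x hx => ?_).to_subtype
  simpa [sub_eq_zero] using mem_frobeniusFixedField.1 hx

theorem sq_mem_frobeniusFixedField {k : ℕ} {a : F} (ha : a ^ p ^ k = -a) :
    a ^ 2 ∈ frobeniusFixedField F p k := by
  rw [mem_frobeniusFixedField, pow_right_comm, ha, neg_sq]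

theorem notMem_frobeniusFixedField (hF : ringChar F ≠ 2) {k : ℕ} {a : F} (ha0 : a ≠ 0)
    (ha : a ^ p ^ k = -a) : a ∉ frobeniusFixedField F p k := fun hmem =>
  ha0 <| (Ring.eq_self_iff_eq_zero_of_char_ne_two hF).1 <|
    ha.symm.trans (mem_frobeniusFixedField.1 hmem)

end FrobeniusFixedField

theorem stmt_16_general {F : Type*} [Field F] {p : ℕ} [CharP F p] (hodd : Odd p) (k i : ℕ) {a : F}
    (ha : a ^ (p ^ k - 1) = -1) :
    a ^ 2 ∈ {x : F | x ^ p ^ k = x} ∧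
      Set.BijOn (fun x : F => x ^ p ^ i - a ^ 2 * x)
        {x : F | x ^ p ^ k = x} {x : F | x ^ p ^ k = x} := by
  have : Fact p.Prime := ⟨CharP.char_prime_of_ne_zero F hodd.pos.ne'⟩
  have hchar : ringChar F ≠ 2 := ringChar.eq F p ▸ hodd.ne_two_of_dvd_nat dvd_rfl
  have hexp : p ^ k - 1 ≠ 0 := fun h =>
    Ring.neg_one_ne_one_of_char_ne_two hchar (by rw [← ha, h, pow_zero])
  have ha0 : a ≠ 0 := ne_zero_pow hexp (ha ▸ neg_ne_zero.2 one_ne_zero)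
  have hneg : a ^ p ^ k = -a := by rw [← pow_sub_one_mul (by omega), ha, neg_one_mul]
  have hsq := sq_mem_frobeniusFixedField hneg
  have hns := not_isSquare_sq_of_notMem (notMem_frobeniusFixedField hchar ha0 hneg) hsq
  have := finite_frobeniusFixedField (F := F) (p := p) (k := k) (by omega)
  exact ⟨hsq, bijOn_pow_sub_mul_of_not_isSquare hodd i _ hns⟩

/-- **Lemma.** Let `p` be an odd prime, `k, i ≥ 1`, and let `F` be the finite field with
`p^{2k}` elements. If `a ∈ F` satisfies `a^{p^k - 1} = -1`, then `a²` lies in the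
subfield `F_{p^k} = {x : F | x^{p^k} = x}`, and the linearized map `x ↦ x^{p^i} - a²·x`
is a bijection of `F_{p^k}`. -/
theorem stmt_16 (p : ℕ) (hp : p.Prime) (hodd : Odd p) (k i : ℕ) (hk : 0 < k) (hi : 0 < i)
    (F : Type*) [Field F] [Fintype F] (hF : Fintype.card F = p ^ (2 * k))
    (a : F) (ha : a ^ (p ^ k - 1) = -1)
    (S : Set F) (hS : S = {x : F | x ^ (p ^ k) = x}) :
    a ^ 2 ∈ S ∧ Set.BijOn (fun x : F => x ^ (p ^ i) - a ^ 2 * x) S S := by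
  have := Fact.mk hp
  have : CharP F p := charP_of_card_eq_prime_pow hF
  exact hS ▸ stmt_16_general hodd k i ha
end
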